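/- arXiv:1604.06940 — 3 statements merged into one kernel-verified Lean document; each statement's English description precedes it below -/
import Mathlib

section
/- If f ∈ L¹(ℝ²), the set {w ∈ ℝ² | f(w) ≠ 0} has finite Lebesgue measure, and the Weyl transform W(f) is a finite rank operator on L²(ℝ), then f = 0 almost everywhere. -/
open MeasureTheory Complex Real

/-!
Absorb the phase into the symbol, `G(x, y) = f(x, y) e^{πixy}`, so that the operator has kernel
`K(t, t + x) = κ(x, t) = ∫ G(x, y) e^{2πiyt} dy`. Finite rank gives `κ(x, t) = ∑ⱼ qⱼ(t) conj (eⱼ(t + x))`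
almost everywhere, with finitely many `qⱼ ∈ L²` and `e₁, …, e_N` orthonormal (`finite_rank_form`,
`kernel_form`).

The argument is in the spirit of Amrein and Berthier. Translating `G` by `a` in the second variable
multiplies `κ` by `e^{2πiat}`, hence replaces each `qⱼ` by `e^{2πiat} qⱼ(t)` and leaves the `eⱼ` alone.
So every linear combination `F` of such translates is again the symbol of an operator with the same
`e₁, …, e_N`. For such an `F`, Fourier inversion in the second variable and Cauchy–Schwarz bound
`‖F‖_∞²` by `N ∑ⱼ ‖qⱼ‖₂²`, and Plancherel identifies the sum with `‖F‖₂²`; thus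
`‖F‖_∞² ≤ N ‖F‖₂²` (`symbol_bound`). A space of `L²` functions with this property, all supported in
a set `S`, has dimension at most `N |S|`: sum the squares of an orthonormal basis and integrate
(`finrank_le_of_sup_bound`).

Let `A = {G ≠ 0}`. For any `m`, the `m` translates of `G` by `0, h, …, (m - 1)h` are supported in a set
of measure at most `|A| + 1` once `h > 0` is small (`exists_small_step`). If `G` is not almost
everywhere zero, they are linearly independent, because a nonzero trigonometric polynomial vanishes
only on a null set. Hence `m ≤ N (|A| + 1)` for every `m`, which is absurd (`symbol_ae_zero`).
-/

/-! ### Fourier inversion and Plancherel on the line -/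

/-- The Fourier integral `∫ u(y) e^{2πiσyt} dy` on the line, with a sign parameter `σ`, so that
`σ = -1` is the Fourier transform and `σ = 1` the inverse Fourier transform. -/
noncomputable def FT (σ : ℝ) (u : ℝ → ℂ) (t : ℝ) : ℂ :=
  ∫ y : ℝ, u y * cexp (2 * π * I * σ * y * t)

lemma norm_cexp_phase (σ y t : ℝ) : ‖cexp (2 * π * I * σ * y * t)‖ = 1 := by
  have : (2 * π * I * σ * y * t : ℂ) = ((2 * π * σ * y * t : ℝ) : ℂ) * I := by push_cast; ring
  rw [this, Complex.norm_exp_ofReal_mul_I]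

lemma norm_FT_le (σ : ℝ) (u : ℝ → ℂ) (t : ℝ) : ‖FT σ u t‖ ≤ ∫ y, ‖u y‖ := by
  refine (norm_integral_le_integral_norm _).trans (le_of_eq ?_)
  simp only [norm_mul, norm_cexp_phase, mul_one]

lemma FT_congr_ae {u v : ℝ → ℂ} (σ : ℝ) (h : u =ᵐ[volume] v) (t : ℝ) : FT σ u t = FT σ v t := by
  refine integral_congr_ae ?_
  filter_upwards [h] with y hy
  rw [hy]

lemma FT_continuous (σ : ℝ) {u : ℝ → ℂ} (hu : Integrable u) : Continuous (FT σ u) := by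
  refine continuous_of_dominated (F := fun (t y : ℝ) => u y * cexp (2 * π * I * σ * y * t))
    (bound := fun (y : ℝ) => ‖u y‖) (fun t => ?_) (fun t => ?_) hu.norm ?_
  · exact hu.1.mul (by fun_prop)
  · refine .of_forall fun y => ?_
    simp only [norm_mul, norm_cexp_phase, mul_one, le_refl]
  · exact .of_forall fun y => by fun_prop

/-- The multiplication formula for the Fourier integral (Fubini). -/
lemma FT_flip (σ : ℝ) {u v : ℝ → ℂ} (hu : Integrable u) (hv : Integrable v) :
    ∫ t, FT σ u t * v t = ∫ y, u y * FT σ v y := by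
  have h1 : ∀ t, FT σ u t * v t = ∫ y, u y * v t * cexp (2 * π * I * σ * y * t) := by
    intro t
    rw [FT, ← integral_mul_const]
    congr 1; ext y; ring
  have h2 : ∀ y, u y * FT σ v y = ∫ t, u y * v t * cexp (2 * π * I * σ * y * t) := by
    intro t
    rw [FT, ← integral_const_mul]
    congr 1; ext y
    rw [show (2 * π * I * σ * y * t : ℂ) = 2 * π * I * σ * t * y by ring]; ring
  simp_rw [h1, h2]
  refine integral_integral_swap (f := fun t y => u y * v t * cexp (2 * π * I * σ * y * t)) ?_
  have h3 : Integrable (fun p : ℝ × ℝ => v p.1 * u p.2) (volume.prod volume) := hv.mul_prod hu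
  refine h3.mono ?_ (.of_forall fun p => ?_)
  · have h4 : AEStronglyMeasurable (fun p : ℝ × ℝ =>
        v p.1 * u p.2 * cexp (2 * π * I * σ * p.2 * p.1)) (volume.prod volume) := h3.1.mul (by fun_prop)
    refine h4.congr (.of_forall fun p => ?_)
    simp only [Function.uncurry]; ring
  · simp only [Function.uncurry, norm_mul, norm_cexp_phase, mul_one]
    rw [mul_comm]

lemma FT_conj (σ : ℝ) (u : ℝ → ℂ) (t : ℝ) :
    FT σ (fun y => (starRingEnd ℂ) (u y)) t = (starRingEnd ℂ) (FT (-σ) u t) := by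
  rw [FT, FT, ← integral_conj]
  congr 1; ext y
  rw [map_mul, ← Complex.exp_conj]
  simp [map_ofNat (starRingEnd ℂ) 2]

lemma FT_one_eq (u : ℝ → ℂ) : FT 1 u = FourierTransformInv.fourierInv u := by
  ext t
  rw [Real.fourierInv_eq', FT]
  congr 1; ext y
  rw [smul_eq_mul, mul_comm]
  congr 2
  simp; ring

lemma FT_neg_one_eq (u : ℝ → ℂ) : FT (-1) u = FourierTransform.fourier u := by
  ext t
  rw [Real.fourier_eq', FT]
  congr 1; ext y
  rw [smul_eq_mul, mul_comm]
  congr 2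
  simp; ring

/-- Fourier inversion in `L¹`, almost everywhere and without any continuity assumption. -/
lemma FT_inversion {u : ℝ → ℂ} (hu : Integrable u) (hk : Integrable (FT 1 u)) :
    ∀ᵐ y, u y = FT (-1) (FT 1 u) y := by
  refine ae_eq_of_integral_contDiff_smul_eq hu.locallyIntegrable
    (FT_continuous _ hk).locallyIntegrable ?_
  intro g hg hgc
  have hg' : ContDiff ℝ (⊤ : ℕ∞) (fun x => (g x : ℂ)) := Complex.ofRealCLM.contDiff.comp hg
  have hgc' : HasCompactSupport (fun x => (g x : ℂ)) :=
    hgc.comp_left (g := fun r : ℝ => (r : ℂ)) (by simp)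
  let G : SchwartzMap ℝ ℂ := hgc'.toSchwartzMap hg'
  have hG : ∀ x, G x = (g x : ℂ) := fun x => rfl
  let ψ : SchwartzMap ℝ ℂ := FourierTransform.fourier G
  have hψ : ∀ x, ψ x = FT (-1) G x := by
    intro x
    rw [FT_neg_one_eq, ← SchwartzMap.fourier_coe]
  have hG2 : ∀ x, G x = FT 1 ψ x := by
    intro x
    rw [FT_one_eq, ← SchwartzMap.fourierInv_coe]
    simp [ψ]
  calc ∫ x, g x • u x = ∫ x, u x * FT 1 ψ x := by
        congr 1; ext x; rw [← hG2, hG, real_smul, mul_comm]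
    _ = ∫ x, FT 1 u x * ψ x := (FT_flip 1 hu ψ.integrable).symm
    _ = ∫ x, FT 1 u x * FT (-1) G x := by simp_rw [hψ]
    _ = ∫ x, FT (-1) (FT 1 u) x * G x := (FT_flip (-1) hk G.integrable).symm
    _ = _ := by congr 1; ext x; rw [hG, real_smul, mul_comm]

/-- Plancherel for an integrable function with integrable transform, deduced from the
multiplication formula and inversion. -/
lemma FT_plancherel {u : ℝ → ℂ} (hu : Integrable u) (hk : Integrable (FT 1 u)) :
    ∫⁻ y, ‖u y‖ₑ ^ 2 = ∫⁻ t, ‖FT 1 u t‖ₑ ^ 2 := by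
  have hinv := FT_inversion hu hk
  have hb : ∀ᵐ y, ‖u y‖ ≤ ∫ t, ‖FT 1 u t‖ := by
    filter_upwards [hinv] with y hy
    rw [hy]; exact norm_FT_le _ _ _
  have key : ∫ y, u y * (starRingEnd ℂ) (u y) = ∫ t, FT 1 u t * (starRingEnd ℂ) (FT 1 u t) := by
    rw [FT_flip 1 hu (v := fun t => (starRingEnd ℂ) (FT 1 u t))
      (by exact (LinearIsometryEquiv.integrable_comp_iff conjLIE).2 hk)]
    refine integral_congr_ae ?_
    filter_upwards [hinv] with y hy
    rw [FT_conj, ← hy]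
  simp_rw [Complex.mul_conj, Complex.normSq_eq_norm_sq, integral_complex_ofReal] at key
  have key2 := Complex.ofReal_injective key
  have i1 : Integrable (fun y => ‖u y‖ ^ 2) := by
    simp_rw [pow_two]
    refine hu.norm.bdd_mul hu.norm.1 (c := ∫ t, ‖FT 1 u t‖) ?_
    simpa using hb
  have i2 : Integrable (fun y => ‖FT 1 u y‖ ^ 2) := by
    simp_rw [pow_two]
    refine hk.norm.bdd_mul hk.norm.1 (c := ∫ t, ‖u t‖) ?_
    simpa using (Filter.Eventually.of_forall (norm_FT_le 1 u))
  have := congrArg ENNReal.ofReal key2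
  rw [ofReal_integral_eq_lintegral_ofReal i1 (.of_forall fun _ => by positivity),
    ofReal_integral_eq_lintegral_ofReal i2 (.of_forall fun _ => by positivity)] at this
  simpa [ENNReal.ofReal_pow] using this

/-! ### The sup bound for symbols of finite rank operators -/

lemma Lp_enorm_sq {α : Type*} [MeasurableSpace α] {μ : Measure α} (F : Lp ℂ 2 μ) :
    ‖F‖ₑ ^ 2 = ∫⁻ s, ‖F s‖ₑ ^ 2 ∂μ := by
  rw [Lp.enorm_def]
  have := eLpNorm_nnreal_pow_eq_lintegral (μ := μ) (f := (F : α → ℂ)) (p := 2) (by norm_num)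
  simpa using this

lemma Lp_coeFn_sum_smul {α ι : Type*} [MeasurableSpace α] {μ : Measure α} [Fintype ι]
    (a : ι → ℂ) (v : ι → Lp ℂ 2 μ) :
    ∀ᵐ s ∂μ, (∑ i, a i • v i : Lp ℂ 2 μ) s = ∑ i, a i * v i s := by
  have h := Lp.coeFn_finsetSum Finset.univ (fun i => a i • v i)
  have h2 : ∀ᵐ s ∂μ, ∀ i, (a i • v i : Lp ℂ 2 μ) s = a i * v i s := by
    rw [ae_all_iff]; intro i
    filter_upwards [Lp.coeFn_smul (a i) (v i)] with s hs
    simpa using hs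
  filter_upwards [h, h2] with s hs hs2
  rw [hs]
  simp [hs2]

lemma orthonormal_norm_sq {E : Type*} [NormedAddCommGroup E] [InnerProductSpace ℂ E]
    {ι : Type*} [Fintype ι] {e : ι → E} (he : Orthonormal ℂ e) (a : ι → ℂ) :
    ‖∑ i, a i • e i‖ ^ 2 = ∑ i, ‖a i‖ ^ 2 := by
  have h := he.inner_sum a a Finset.univ
  rw [inner_self_eq_norm_sq_to_K] at h
  simp_rw [RCLike.conj_mul] at h
  exact_mod_cast h

lemma orthonormal_lintegral {N : ℕ} {e : Fin N → Lp ℂ 2 (volume : Measure ℝ)}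
    (he : Orthonormal ℂ e) (a : Fin N → ℂ) :
    ∫⁻ s, ‖∑ j, a j * (starRingEnd ℂ) (e j s)‖ₑ ^ 2 = ∑ j, ‖a j‖ₑ ^ 2 := by
  have h1 := orthonormal_norm_sq he (fun j => (starRingEnd ℂ) (a j))
  have h2 := Lp_enorm_sq (∑ j, (starRingEnd ℂ) (a j) • e j)
  have h3 : ‖∑ j, (starRingEnd ℂ) (a j) • e j‖ₑ ^ 2 = ∑ j, ‖a j‖ₑ ^ 2 := by
    have := congrArg ENNReal.ofReal h1
    rw [ENNReal.ofReal_sum_of_nonneg (fun _ _ => by positivity)] at this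
    simpa [ENNReal.ofReal_pow] using this
  rw [← h3, h2]
  refine lintegral_congr_ae ?_
  filter_upwards [Lp_coeFn_sum_smul (fun j => (starRingEnd ℂ) (a j)) e] with s hs
  rw [hs, ← RCLike.enorm_conj]
  simp [map_sum]

lemma enorm_FT_le (σ : ℝ) (u : ℝ → ℂ) (t : ℝ) : ‖FT σ u t‖ₑ ≤ ∫⁻ y, ‖u y‖ₑ := by
  refine (enorm_integral_le_lintegral_enorm _).trans (le_of_eq ?_)
  congr 1; ext y
  rw [enorm_mul, ← ofReal_norm (cexp _), norm_cexp_phase]; simp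

/-- Cauchy–Schwarz for the restriction of a rank `N` kernel to a line parallel to the diagonal. -/
lemma lintegral_diag_sq_le {N : ℕ} {q : Fin N → ℝ → ℂ} (hq : ∀ j, StronglyMeasurable (q j))
    {e : Fin N → Lp ℂ 2 (volume : Measure ℝ)} (he : Orthonormal ℂ e) (x : ℝ) :
    (∫⁻ t, ‖∑ j, q j t * (starRingEnd ℂ) (e j (t + x))‖ₑ) ^ 2
      ≤ N * ∑ j, ∫⁻ t, ‖q j t‖ₑ ^ 2 := by
  have hem : ∀ j, Measurable (fun t => e j (t + x)) := fun j =>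
    (Lp.stronglyMeasurable (e j)).measurable.comp (by fun_prop)
  have h1 : ∫⁻ t, ‖∑ j, q j t * (starRingEnd ℂ) (e j (t + x))‖ₑ
      ≤ ∑ j, (∫⁻ t, ‖q j t‖ₑ ^ 2) ^ (1 / 2 : ℝ) := by
    calc _ ≤ ∫⁻ t, ∑ j, ‖q j t‖ₑ * ‖e j (t + x)‖ₑ := by
          refine lintegral_mono fun t => (enorm_sum_le _ _).trans (le_of_eq ?_)
          simp [enorm_mul]
      _ = ∑ j, ∫⁻ t, ‖q j t‖ₑ * ‖e j (t + x)‖ₑ := by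
          refine lintegral_finsetSum _ fun j _ => ?_
          exact (hq j).measurable.enorm.mul (hem j).enorm
      _ ≤ _ := by
          refine Finset.sum_le_sum fun j _ => ?_
          have := ENNReal.lintegral_mul_le_Lp_mul_Lq volume Real.HolderConjugate.two_two
            (hq j).measurable.enorm.aemeasurable (hem j).enorm.aemeasurable
          refine this.trans (le_of_eq ?_)
          have h2 : ∫⁻ t, ‖e j (t + x)‖ₑ ^ (2 : ℝ) = 1 := by
            rw [lintegral_add_right_eq_self (fun t => ‖e j t‖ₑ ^ (2 : ℝ))]
            have := Lp_enorm_sq (e j)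
            rw [← ofReal_norm, he.1 j] at this
            simpa using this.symm
          rw [h2]; simp
  calc _ ≤ (∑ j, (∫⁻ t, ‖q j t‖ₑ ^ 2) ^ (1 / 2 : ℝ)) ^ 2 := by gcongr
    _ ≤ _ := by
      have := ENNReal.rpow_sum_le_const_mul_sum_rpow Finset.univ
        (fun j => (∫⁻ t, ‖q j t‖ₑ ^ 2) ^ (1 / 2 : ℝ)) (p := 2) (by norm_num)
      simp_rw [← ENNReal.rpow_mul] at this
      norm_num at this
      simpa using this

/-- If the kernel `κ(x, t) = ∫ G(x, y) e^{2πiyt} dy` of an integrable symbol `G` has the form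
`∑ⱼ qⱼ(t) conj (eⱼ(t + x))` with `e` orthonormal, so that the operator has rank at most `N`, then
`G ∈ L²` and `‖G‖_∞² ≤ N ‖G‖₂²`. The sup bound comes from Fourier inversion in the second variable
together with Cauchy–Schwarz; the identity `‖G‖₂² = ∑ⱼ ‖qⱼ‖₂²` from Plancherel. -/
lemma symbol_bound {N : ℕ} {G : ℝ × ℝ → ℂ} (hGm : StronglyMeasurable G) (hG : Integrable G)
    {q : Fin N → ℝ → ℂ} (hq : ∀ j, StronglyMeasurable (q j))
    (hq2 : ∀ j, MemLp (q j) 2)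
    {e : Fin N → Lp ℂ 2 (volume : Measure ℝ)} (he : Orthonormal ℂ e)
    (hk : ∀ᵐ x, ∀ᵐ t, FT 1 (fun y => G (x, y)) t
      = ∑ j, q j t * (starRingEnd ℂ) (e j (t + x))) :
    MemLp G 2 ∧ ∀ᵐ w, ‖G w‖ₑ ^ 2 ≤ N * ∫⁻ w, ‖G w‖ₑ ^ 2 := by
  set Q : ENNReal := ∑ j, ∫⁻ t, ‖q j t‖ₑ ^ 2 with hQ
  have hQt : Q ≠ ⊤ := by
    refine ENNReal.sum_ne_top.2 fun j _ => ?_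
    have h := eLpNorm_nnreal_pow_eq_lintegral (μ := volume) (f := q j) (p := 2) (by norm_num)
    have h2 := (hq2 j).2
    simp only [NNReal.coe_ofNat, ENNReal.rpow_ofNat] at h
    rw [← h]
    exact ENNReal.pow_ne_top h2.ne
  have hQtop : N * Q ≠ ⊤ := ENNReal.mul_ne_top (by simp) hQt
  have hGi : ∀ᵐ x : ℝ, Integrable (fun y => G (x, y)) := Integrable.prod_right_ae hG
  have hline : ∀ᵐ x : ℝ, (∫⁻ t, ‖FT 1 (fun y => G (x, y)) t‖ₑ) ^ 2 ≤ N * Q := by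
    filter_upwards [hk] with x hx
    rw [lintegral_congr_ae (g := fun t => ‖∑ j, q j t * (starRingEnd ℂ) (e j (t + x))‖ₑ)]
    · exact lintegral_diag_sq_le hq he x
    · filter_upwards [hx] with t ht
      rw [ht]
  have hint : ∀ᵐ x : ℝ, Integrable (FT 1 (fun y => G (x, y))) := by
    filter_upwards [hline, hGi] with x hx hxi
    refine ⟨(FT_continuous 1 hxi).aestronglyMeasurable, ?_⟩
    have := ne_top_of_le_ne_top hQtop hx
    rw [hasFiniteIntegral_iff_enorm]
    by_contra hcon
    rw [not_lt, top_le_iff] at hcon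
    simp [hcon] at this
  have hbound : ∀ᵐ w : ℝ × ℝ, ‖G w‖ₑ ^ 2 ≤ N * Q := by
    refine (Measure.ae_prod_iff_ae_ae (μ := (volume : Measure ℝ)) (ν := (volume : Measure ℝ))
      (p := fun w => ‖G w‖ₑ ^ 2 ≤ N * Q) ?_).2 ?_
    · exact measurableSet_le (hGm.measurable.enorm.pow_const 2) measurable_const
    filter_upwards [hline, hGi, hint] with x hx hxi hxk
    filter_upwards [FT_inversion hxi hxk] with y hy
    refine le_trans ?_ hx
    rw [hy]
    gcongr
    exact enorm_FT_le _ _ _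
  have hL2 : ∫⁻ w, ‖G w‖ₑ ^ 2 = Q := by
    have hem : ∀ j, Measurable (fun s => e j s) := fun j =>
      (Lp.stronglyMeasurable (e j)).measurable
    calc ∫⁻ w, ‖G w‖ₑ ^ 2 = ∫⁻ x, ∫⁻ y, ‖G (x, y)‖ₑ ^ 2 :=
          lintegral_prod _ (hGm.measurable.enorm.pow_const 2).aemeasurable
      _ = ∫⁻ x, ∫⁻ t, ‖∑ j, q j t * (starRingEnd ℂ) (e j (t + x))‖ₑ ^ 2 := by
          refine lintegral_congr_ae ?_
          filter_upwards [hk, hGi, hint] with x hx hxi hxk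
          rw [FT_plancherel hxi hxk]
          refine lintegral_congr_ae ?_
          filter_upwards [hx] with t ht
          rw [ht]
      _ = ∫⁻ t, ∫⁻ x, ‖∑ j, q j t * (starRingEnd ℂ) (e j (t + x))‖ₑ ^ 2 := by
          refine lintegral_lintegral_swap
            (f := fun x t => ‖∑ j, q j t * (starRingEnd ℂ) (e j (t + x))‖ₑ ^ 2) ?_
          refine (Measurable.pow_const (Measurable.enorm ?_) 2).aemeasurable
          refine Finset.measurable_sum _ fun j _ => ?_
          refine ((hq j).measurable.comp measurable_snd).mul ?_
          refine (Complex.continuous_conj.measurable).comp ((hem j).comp ?_)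
          fun_prop
      _ = ∫⁻ t, ∑ j, ‖q j t‖ₑ ^ 2 := by
          congr 1; ext t
          rw [lintegral_add_left_eq_self
            (fun s => ‖∑ j, q j t * (starRingEnd ℂ) (e j s)‖ₑ ^ 2) t]
          exact orthonormal_lintegral he _
      _ = Q := lintegral_finsetSum _ fun j _ => (hq j).measurable.enorm.pow_const 2
  refine ⟨⟨hG.1, ?_⟩, by rw [hL2]; exact hbound⟩
  have h := eLpNorm_nnreal_pow_eq_lintegral (μ := volume) (f := G) (p := 2) (by norm_num)
  simp only [NNReal.coe_ofNat, ENNReal.rpow_ofNat] at h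
  rw [hL2] at h
  rw [lt_top_iff_ne_top]
  intro hcon
  have h' : eLpNorm G 2 volume ^ 2 = Q := h
  rw [hcon] at h'
  simp at h'
  exact hQt h'.symm

/-! ### The dimension bound -/

/-- A finite dimensional space of `L²` functions supported in a set `S` on which
`‖F‖_∞² ≤ N ‖F‖₂²` has dimension at most `N · |S|`. -/
lemma finrank_le_of_sup_bound {α : Type*} [MeasurableSpace α] {μ : Measure α}
    (V : Submodule ℂ (Lp ℂ 2 μ)) [FiniteDimensional ℂ V] (N : ℕ) {S : Set α}
    (hS : MeasurableSet S) (hsupp : ∀ F ∈ V, ∀ᵐ w ∂μ, w ∉ S → F w = 0)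
    (hb : ∀ F ∈ V, ∀ᵐ w ∂μ, ‖F w‖ ^ 2 ≤ N * ‖F‖ ^ 2) :
    (Module.finrank ℂ V : ENNReal) ≤ N * μ S := by
  set m := Module.finrank ℂ V with hm
  let b := stdOrthonormalBasis ℂ V
  let v : Fin m → Lp ℂ 2 μ := fun i => (b i : Lp ℂ 2 μ)
  have hv : Orthonormal ℂ v := b.orthonormal.comp_linearIsometry V.subtypeₗᵢ
  have hvV : ∀ i, v i ∈ V := fun i => (b i).2
  -- The sup bound, simultaneously for a dense sequence of coefficient vectors.
  let d : ℕ → (Fin m → ℂ) := TopologicalSpace.denseSeq (Fin m → ℂ)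
  have h1 : ∀ᵐ w ∂μ, ∀ n, ‖∑ i, d n i * v i w‖ ^ 2 ≤ N * ∑ i, ‖d n i‖ ^ 2 := by
    rw [ae_all_iff]; intro n
    have hmem : ∑ i, d n i • v i ∈ V := V.sum_mem fun i _ => V.smul_mem _ (hvV i)
    filter_upwards [hb _ hmem, Lp_coeFn_sum_smul (d n) v] with w hw hw2
    rwa [hw2, orthonormal_norm_sq hv] at hw
  have h2 : ∀ᵐ w ∂μ, ∑ i, ‖v i w‖ ^ 2 ≤ (N : ℝ) := by
    filter_upwards [h1] with w hw
    have h3 : ∀ a : Fin m → ℂ, ‖∑ i, a i * v i w‖ ^ 2 ≤ N * ∑ i, ‖a i‖ ^ 2 := by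
      intro a
      have hcl : IsClosed {a : Fin m → ℂ | ‖∑ i, a i * v i w‖ ^ 2 ≤ N * ∑ i, ‖a i‖ ^ 2} :=
        isClosed_le (by fun_prop) (by fun_prop)
      exact closure_minimal (s := Set.range d) (by rintro _ ⟨n, rfl⟩; exact hw n) hcl
        ((TopologicalSpace.denseRange_denseSeq (Fin m → ℂ)) a)
    have h4 := h3 (fun i => (starRingEnd ℂ) (v i w))
    simp_rw [RCLike.conj_mul] at h4
    have h5 : ‖∑ i, ((‖v i w‖ : ℂ)) ^ 2‖ = ∑ i, ‖v i w‖ ^ 2 := by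
      rw [show (∑ i, ((‖v i w‖ : ℂ)) ^ 2) = ((∑ i, ‖v i w‖ ^ 2 : ℝ) : ℂ) by push_cast; rfl,
        Complex.norm_real, Real.norm_of_nonneg (by positivity)]
    have h4' : (∑ i, ‖v i w‖ ^ 2) ^ 2 ≤ N * ∑ i, ‖v i w‖ ^ 2 := by
      rw [← h5]; simpa [h5] using h4
    by_contra hcon
    push Not at hcon
    have hN : (0 : ℝ) ≤ N := by positivity
    nlinarith
  have h6 : ∀ i, ∫⁻ w, ‖v i w‖ₑ ^ 2 ∂μ = 1 := by
    intro i
    rw [← Lp_enorm_sq, ← ofReal_norm, hv.1 i]; simp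
  calc (m : ENNReal) = ∑ i : Fin m, ∫⁻ w, ‖v i w‖ₑ ^ 2 ∂μ := by simp [h6]
    _ = ∫⁻ w, ∑ i : Fin m, ‖v i w‖ₑ ^ 2 ∂μ := (lintegral_finsetSum _ fun i _ =>
        ((Lp.stronglyMeasurable (v i)).measurable.enorm.pow_const 2)).symm
    _ ≤ ∫⁻ w, S.indicator (fun _ => (N : ENNReal)) w ∂μ := by
        refine lintegral_mono_ae ?_
        filter_upwards [h2, ae_all_iff.2 fun i => hsupp _ (hvV i)] with w hw hw2
        by_cases hwS : w ∈ S
        · rw [Set.indicator_of_mem hwS]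
          have := ENNReal.ofReal_le_ofReal hw
          rw [ENNReal.ofReal_sum_of_nonneg (fun _ _ => by positivity)] at this
          simpa [ENNReal.ofReal_pow] using this
        · simp [hw2 _ hwS]
    _ = N * μ S := by rw [lintegral_indicator_const hS]

/-- `finrank_le_of_sup_bound` for the span of `m` linearly independent functions. -/
lemma card_le_of_sup_bound {α : Type*} [MeasurableSpace α] {μ : Measure α} {m N : ℕ}
    {G : Fin m → α → ℂ} (hG : ∀ k, MemLp (G k) 2 μ) {S : Set α}
    (hS : MeasurableSet S) (hsupp : ∀ k, ∀ w ∉ S, G k w = 0)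
    (hlin : ∀ c : Fin m → ℂ, (∀ᵐ w ∂μ, ∑ k, c k * G k w = 0) → c = 0)
    (hb : ∀ c : Fin m → ℂ, ∀ᵐ w ∂μ,
      ‖∑ k, c k * G k w‖ₑ ^ 2 ≤ N * ∫⁻ w, ‖∑ k, c k * G k w‖ₑ ^ 2 ∂μ) :
    (m : ENNReal) ≤ N * μ S := by
  let v : Fin m → Lp ℂ 2 μ := fun k => (hG k).toLp
  have hv : ∀ c : Fin m → ℂ, ∀ᵐ w ∂μ, (∑ k, c k • v k : Lp ℂ 2 μ) w = ∑ k, c k * G k w := by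
    intro c
    filter_upwards [Lp_coeFn_sum_smul c v, ae_all_iff.2 fun k => (hG k).coeFn_toLp] with w hw hw2
    rw [hw]
    exact Finset.sum_congr rfl fun k _ => by rw [hw2 k]
  have hli : LinearIndependent ℂ v := by
    rw [Fintype.linearIndependent_iff]
    intro c hc
    refine congrFun (hlin c ?_)
    filter_upwards [hv c, Lp.coeFn_zero ℂ 2 μ] with w hw hw0
    rw [← hw, hc, hw0]; rfl
  have hfr := finrank_span_eq_card hli
  rw [Fintype.card_fin] at hfr
  rw [← hfr]
  have : FiniteDimensional ℂ (Submodule.span ℂ (Set.range v)) :=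
    FiniteDimensional.span_of_finite ℂ (Set.finite_range v)
  refine finrank_le_of_sup_bound _ N hS ?_ ?_
  · intro F hF
    obtain ⟨c, rfl⟩ := (Submodule.mem_span_range_iff_exists_fun ℂ).1 hF
    filter_upwards [hv c] with w hw hwS
    rw [hw]
    exact Finset.sum_eq_zero fun k _ => by rw [hsupp k w hwS, mul_zero]
  · intro F hF
    obtain ⟨c, rfl⟩ := (Submodule.mem_span_range_iff_exists_fun ℂ).1 hF
    have hnorm : ∫⁻ w, ‖∑ k, c k * G k w‖ₑ ^ 2 ∂μ = ‖∑ k, c k • v k‖ₑ ^ 2 := by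
      rw [Lp_enorm_sq]
      refine lintegral_congr_ae ?_
      filter_upwards [hv c] with w hw
      rw [hw]
    filter_upwards [hv c, hb c] with w hw hw2
    rw [hnorm, ← hw] at hw2
    have h := ENNReal.toReal_mono (ENNReal.mul_ne_top (by simp) (by simp)) hw2
    simpa using h

/-! ### The kernel of a finite rank operator -/

/-- A finite rank operator as a sum of rank one operators, with orthonormal `e` spanning the
orthogonal complement of the kernel. -/
lemma finite_rank_form {H : Type*} [NormedAddCommGroup H] [InnerProductSpace ℂ H]
    [CompleteSpace H] (W : H →L[ℂ] H)
    (hrank : FiniteDimensional ℂ (LinearMap.range (W : H →ₗ[ℂ] H))) :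
    ∃ (N : ℕ) (g e : Fin N → H), Orthonormal ℂ e ∧ ∀ φ, W φ = ∑ j, inner ℂ (e j) φ • g j := by
  let K : Submodule ℂ H := LinearMap.ker (W : H →ₗ[ℂ] H)
  have hK : IsClosed (K : Set H) := W.isClosed_ker
  have : CompleteSpace K := hK.completeSpace_coe
  have : FiniteDimensional ℂ Kᗮ := by
    refine FiniteDimensional.of_injective
      ((W : H →ₗ[ℂ] H).rangeRestrict.comp Kᗮ.subtype) ?_
    rw [← LinearMap.ker_eq_bot, LinearMap.ker_eq_bot']
    rintro ⟨x, hx⟩ h0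
    have hxK : x ∈ K := by
      have := congrArg Subtype.val h0
      simpa [K] using this
    have : x = 0 := by
      have := K.inner_right_of_mem_orthogonal hxK hx
      simpa using this
    simp [this]
  let b := stdOrthonormalBasis ℂ Kᗮ
  refine ⟨_, fun j => W (b j), fun j => (b j : H),
    b.orthonormal.comp_linearIsometry Kᗮ.subtypeₗᵢ, fun φ => ?_⟩
  have h1 := K.starProjection_add_starProjection_orthogonal φ
  have h2 : W (K.starProjection φ) = 0 := by
    have : K.starProjection φ ∈ K := K.starProjection_apply_mem φ
    exact LinearMap.mem_ker.1 this
  conv_lhs => rw [← h1, map_add, h2, zero_add, b.starProjection_eq_sum_rankOne]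
  simp

lemma ae_eq_zero_of_rat_intervals {L : ℝ → ℂ} (hL : LocallyIntegrable L)
    (h : ∀ a b : ℚ, ∫ s in Set.Ioc (a : ℝ) b, L s = 0) : ∀ᵐ s, L s = 0 := by
  have hI : ∀ a b : ℝ, IntervalIntegrable L volume a b := fun a b =>
    (hL.integrableOn_isCompact isCompact_uIcc).intervalIntegrable
  have hprim : ∀ x : ℝ, ∫ s in (0 : ℝ)..x, L s = 0 := by
    intro x
    have hcont := intervalIntegral.continuous_primitive hI 0
    have heq : Set.EqOn (fun x : ℝ => ∫ s in (0 : ℝ)..x, L s) (fun _ => 0)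
        (Set.range ((↑) : ℚ → ℝ)) := by
      rintro _ ⟨r, rfl⟩
      have h1 := h 0 r
      have h2 := h r 0
      rw [Rat.cast_zero] at h1 h2
      simp [intervalIntegral, h1, h2]
    exact congrFun (hcont.ext_on Rat.denseRange_cast continuous_const heq) x
  filter_upwards [LocallyIntegrable.ae_hasDerivAt_integral hL] with s hs
  have h1 := hs 0
  simp_rw [hprim] at h1
  exact h1.unique (hasDerivAt_const s 0)

lemma measurable_kernel {G : ℝ × ℝ → ℂ} (hGm : StronglyMeasurable G) :
    StronglyMeasurable (fun p : ℝ × ℝ => FT 1 (fun y => G (p.1, y)) p.2) := by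
  unfold FT
  refine StronglyMeasurable.integral_prod_right
    (f := fun (p : ℝ × ℝ) (y : ℝ) => G (p.1, y) * cexp (2 * π * I * (1 : ℝ) * y * p.2)) ?_
  refine StronglyMeasurable.mul (hGm.comp_measurable (by fun_prop)) ?_
  exact Continuous.stronglyMeasurable (by fun_prop)

lemma integrable_modulated {G : ℝ × ℝ → ℂ} (hG : Integrable G) (t : ℝ) :
    Integrable (fun w : ℝ × ℝ => G w * cexp (2 * π * I * (1 : ℝ) * w.2 * t)) := by
  refine hG.mono (hG.1.mul (Continuous.aestronglyMeasurable (by fun_prop))) (.of_forall fun w => ?_)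
  rw [norm_mul, norm_cexp_phase, mul_one]

lemma integrable_kernel {G : ℝ × ℝ → ℂ} (hG : Integrable G) (t : ℝ) :
    Integrable (fun x : ℝ => FT 1 (fun y => G (x, y)) t) :=
  Integrable.integral_prod_left (integrable_modulated hG t)

/-- The operator applied to the indicator of a bounded interval, written through the kernel. -/
lemma integral_indicator_eq {G : ℝ × ℝ → ℂ} (hG : Integrable G) (t a b : ℝ)
    (φ : ℝ → ℂ) (hφ : φ =ᵐ[volume] (Set.Ioc a b).indicator fun _ => 1) :
    ∫ w : ℝ × ℝ, G w * cexp (2 * π * I * (1 : ℝ) * w.2 * t) * φ (t + w.1)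
      = ∫ s in Set.Ioc a b, FT 1 (fun y => G (s - t, y)) t := by
  set J : ℝ → ℂ := (Set.Ioc a b).indicator fun _ => 1 with hJ
  have hJm : Measurable J := measurable_const.indicator measurableSet_Ioc
  have h1 : ∀ᵐ x : ℝ, φ (t + x) = J (t + x) :=
    (measurePreserving_add_left volume t).quasiMeasurePreserving.ae hφ
  have h2 : ∀ᵐ w : ℝ × ℝ, φ (t + w.1) = J (t + w.1) :=
    (Measure.quasiMeasurePreserving_fst (μ := (volume : Measure ℝ))
      (ν := (volume : Measure ℝ))).ae h1
  have h3 : Integrable (fun w : ℝ × ℝ =>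
      G w * cexp (2 * π * I * (1 : ℝ) * w.2 * t) * J (t + w.1)) := by
    refine (integrable_modulated hG t).mono
      ((integrable_modulated hG t).1.mul ?_) (.of_forall fun w => ?_)
    · exact (hJm.comp (by fun_prop : Measurable fun w : ℝ × ℝ => t + w.1)).aestronglyMeasurable
    · rw [norm_mul]
      refine mul_le_of_le_one_right (norm_nonneg _) ?_
      rw [hJ]
      by_cases hw : t + w.1 ∈ Set.Ioc a b
      · rw [Set.indicator_of_mem hw]; simp
      · rw [Set.indicator_of_notMem hw]; simp
  calc _ = ∫ w : ℝ × ℝ, G w * cexp (2 * π * I * (1 : ℝ) * w.2 * t) * J (t + w.1) := by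
        refine integral_congr_ae ?_
        filter_upwards [h2] with w hw
        rw [hw]
    _ = ∫ x, ∫ y, G (x, y) * cexp (2 * π * I * (1 : ℝ) * y * t) * J (t + x) :=
        integral_prod _ h3
    _ = ∫ x, (fun s => FT 1 (fun y => G (s - t, y)) t * J s) (t + x) := by
        congr 1; ext x
        rw [integral_mul_const]
        simp [FT]
    _ = ∫ s, FT 1 (fun y => G (s - t, y)) t * J s := 
        integral_add_left_eq_self (fun s => FT 1 (fun y => G (s - t, y)) t * J s) t
    _ = _ := by
        rw [← integral_indicator measurableSet_Ioc]
        congr 1; ext s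
        rw [hJ]
        by_cases hs : s ∈ Set.Ioc a b
        · simp only [Set.indicator_of_mem hs, mul_one]
        · simp only [Set.indicator_of_notMem hs, mul_zero]

/-- The kernel of the operator with symbol `G` agrees almost everywhere with the kernel
`∑ⱼ qⱼ(t) conj (eⱼ(s))` of the finite rank operator it is assumed to be. -/
lemma kernel_form {N : ℕ} {G : ℝ × ℝ → ℂ} (hGm : StronglyMeasurable G) (hG : Integrable G)
    (W : Lp ℂ 2 (volume : Measure ℝ) →L[ℂ] Lp ℂ 2 (volume : Measure ℝ))
    (hW : ∀ φ : Lp ℂ 2 (volume : Measure ℝ), ∀ᵐ t : ℝ, (W φ : ℝ → ℂ) t =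
      ∫ w : ℝ × ℝ, G w * cexp (2 * π * I * (1 : ℝ) * w.2 * t) * (φ : ℝ → ℂ) (t + w.1))
    {q e : Fin N → Lp ℂ 2 (volume : Measure ℝ)}
    (hform : ∀ φ, W φ = ∑ j, inner ℂ (e j) φ • q j) :
    ∀ᵐ x, ∀ᵐ t, FT 1 (fun y => G (x, y)) t
      = ∑ j, q j t * (starRingEnd ℂ) (e j (t + x)) := by
  have heloc : ∀ j, LocallyIntegrable (fun s => (starRingEnd ℂ) (e j s)) := by
    intro j
    have h1 : LocallyIntegrable (e j) := (Lp.memLp (e j)).locallyIntegrable (by norm_num)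
    intro x
    obtain ⟨u, hu, hi⟩ := h1 x
    exact ⟨u, hu, (LinearIsometryEquiv.integrable_comp_iff conjLIE).2 hi⟩
  have hIoc : ∀ j (a b : ℝ), IntegrableOn (fun s => (starRingEnd ℂ) (e j s)) (Set.Ioc a b) :=
    fun j a b => ((heloc j).integrableOn_isCompact isCompact_Icc).mono_set Set.Ioc_subset_Icc_self
  have h1 : ∀ᵐ t : ℝ, ∀ a b : ℚ, ∫ s in Set.Ioc (a : ℝ) b, FT 1 (fun y => G (s - t, y)) t
      = ∫ s in Set.Ioc (a : ℝ) b, ∑ j, q j t * (starRingEnd ℂ) (e j s) := by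
    rw [ae_all_iff]; intro a
    rw [ae_all_iff]; intro b
    let φ : Lp ℂ 2 (volume : Measure ℝ) :=
      indicatorConstLp 2 (measurableSet_Ioc (a := (a : ℝ)) (b := (b : ℝ))) (by simp) 1
    filter_upwards [hW φ, Lp_coeFn_sum_smul (fun j => inner ℂ (e j) φ) q] with t ht ht2
    rw [integral_indicator_eq hG t a b φ indicatorConstLp_coeFn, hform φ, ht2] at ht
    rw [← ht, integral_finsetSum _ (fun j _ => (hIoc j a b).const_mul _)]
    refine Finset.sum_congr rfl fun j _ => ?_
    rw [integral_const_mul, integral_conj, ← inner_conj_symm,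
      L2.inner_indicatorConstLp_one, mul_comm]
  have h2 : ∀ᵐ t : ℝ, ∀ᵐ s : ℝ, FT 1 (fun y => G (s - t, y)) t
      = ∑ j, q j t * (starRingEnd ℂ) (e j s) := by
    filter_upwards [h1] with t ht
    have i1 : Integrable (fun s : ℝ => FT 1 (fun y => G (s - t, y)) t) :=
      (integrable_kernel hG t).comp_sub_right t
    have i2 : LocallyIntegrable (fun s : ℝ => ∑ j, q j t * (starRingEnd ℂ) (e j s)) :=
      locallyIntegrable_finsetSum _ fun j _ => (heloc j).smul (q j t)
    have := ae_eq_zero_of_rat_intervals (i1.locallyIntegrable.sub i2) (fun a b => by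
      simp only [Pi.sub_apply]
      rw [integral_sub i1.integrableOn
        ((i2.integrableOn_isCompact isCompact_Icc).mono_set Set.Ioc_subset_Icc_self), ht a b,
        sub_self])
    filter_upwards [this] with s hs
    exact sub_eq_zero.1 hs
  have h3 : ∀ᵐ t : ℝ, ∀ᵐ x : ℝ, FT 1 (fun y => G (x, y)) t
      = ∑ j, q j t * (starRingEnd ℂ) (e j (t + x)) := by
    filter_upwards [h2] with t ht
    have := (measurePreserving_add_left volume t).quasiMeasurePreserving.ae ht
    filter_upwards [this] with x hx
    simpa using hx
  refine (Measure.ae_ae_comm ?_).1 h3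
  refine measurableSet_eq_fun ?_ ?_
  · exact (measurable_kernel hGm).measurable.comp measurable_swap
  · refine Finset.measurable_sum _ fun j _ => ?_
    refine ((Lp.stronglyMeasurable (q j)).measurable.comp measurable_fst).mul ?_
    refine (Complex.continuous_conj.measurable).comp
      ((Lp.stronglyMeasurable (e j)).measurable.comp ?_)
    fun_prop

/-! ### Translates of the symbol -/

lemma FT_translate (u : ℝ → ℂ) (a t : ℝ) :
    FT 1 (fun y => u (y + -a)) t = cexp (2 * π * I * a * t) * FT 1 u t := by
  have h := integral_add_right_eq_self (μ := (volume : Measure ℝ))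
    (fun y : ℝ => u y * cexp (2 * π * I * (1 : ℝ) * ((y + a : ℝ) : ℂ) * t)) (-a)
  rw [FT, FT, ← integral_const_mul]
  calc _ = _ := ?_
    _ = _ := h
    _ = _ := ?_
  · congr 1; ext y
    congr 3
    push_cast; ring
  · congr 1; ext y
    rw [mul_left_comm, ← Complex.exp_add]
    congr 2
    push_cast; ring

/-- The trigonometric polynomial `∑ₖ cₖ e^{2πikht}`. -/
noncomputable def trigPoly {m : ℕ} (c : Fin m → ℂ) (h t : ℝ) : ℂ :=
  ∑ k, c k * cexp (2 * π * I * ((k : ℕ) * h : ℝ) * t)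

lemma trigPoly_continuous {m : ℕ} (c : Fin m → ℂ) (h : ℝ) : Continuous (trigPoly c h) := by
  unfold trigPoly; fun_prop

lemma norm_trigPoly_le {m : ℕ} (c : Fin m → ℂ) (h t : ℝ) : ‖trigPoly c h t‖ ≤ ∑ k, ‖c k‖ := by
  refine (norm_sum_le _ _).trans (Finset.sum_le_sum fun k _ => ?_)
  have := norm_cexp_phase 1 ((k : ℕ) * h) t
  rw [ofReal_one, mul_one] at this
  rw [norm_mul, this, mul_one]

lemma trigPoly_ae_ne_zero {m : ℕ} {c : Fin m → ℂ} (hc : c ≠ 0) {h : ℝ} (hh : 0 < h) :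
    ∀ᵐ t, trigPoly c h t ≠ 0 := by
  let P : Polynomial ℂ := ∑ k : Fin m, Polynomial.monomial (k : ℕ) (c k)
  have hcoeff : ∀ k : Fin m, P.coeff k = c k := by
    intro k
    simp [P, Polynomial.coeff_monomial, Fin.val_inj]
  have hP : P ≠ 0 := by
    intro h0
    refine hc (funext fun k => ?_)
    rw [← hcoeff k, h0]; simp
  have heval : ∀ t, trigPoly c h t = P.eval (cexp (2 * π * I * h * t)) := by
    intro t
    simp only [trigPoly, P, Polynomial.eval_finsetSum, Polynomial.eval_monomial]
    refine Finset.sum_congr rfl fun k _ => ?_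
    rw [← Complex.exp_nat_mul]
    congr 2
    push_cast; ring
  have hroots : {z : ℂ | P.eval z = 0}.Countable := by
    refine (P.roots.toFinset.finite_toSet.subset fun z hz => ?_).countable
    simpa [hP] using hz
  have hpre := hroots.preimage_cexp
  have hinj : Function.Injective (fun t : ℝ => (2 * π * I * h * t : ℂ)) := by
    intro t s hts
    have h2 : (2 * π * I * h : ℂ) ≠ 0 := by
      simp [Real.pi_ne_zero, hh.ne']
    exact_mod_cast mul_left_cancel₀ h2 hts
  have hcount : {t : ℝ | trigPoly c h t = 0}.Countable := by
    refine (hpre.preimage hinj).mono fun t ht => ?_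
    simpa [heval] using ht
  exact hcount.ae_notMem volume

/-- Arbitrarily many translates of a set of finite measure can be placed in a set of measure at
most `|A| + 1`, by taking the translation step small. -/
lemma exists_small_step {A : Set (ℝ × ℝ)} (hA : MeasurableSet A) (hfin : volume A < ⊤) (m : ℕ) :
    ∃ h : ℝ, 0 < h ∧
      volume (⋃ k : Fin m, (fun w : ℝ × ℝ => w + (0, -((k : ℕ) * h))) ⁻¹' A) ≤ volume A + 1 := by
  have hlim : ∀ k : Fin m, Filter.Tendsto (fun h : ℝ =>
      volume (symmDiff ((fun w : ℝ × ℝ => w + (0, -((k : ℕ) * h))) ⁻¹' A) A))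
      (nhds 0) (nhds 0) := by
    intro k
    let f : ℝ → C(ℝ × ℝ, ℝ × ℝ) := fun h => ⟨fun w => w + (0, -((k : ℕ) * h)), by fun_prop⟩
    have hf : Continuous f := ContinuousMap.continuous_of_continuous_uncurry _ (by
      simp only [f, Function.uncurry_def, ContinuousMap.coe_mk]; fun_prop)
    have hmp : ∀ h, MeasurePreserving (f h) volume volume := fun h =>
      measurePreserving_add_right volume ((0, -((k : ℕ) * h)) : ℝ × ℝ)
    have := tendsto_measure_symmDiff_preimage_nhds_zero (hf.tendsto 0)
      (.of_forall hmp) (hmp 0) hA.nullMeasurableSet hfin.ne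
    have h0 : (fun w : ℝ × ℝ => w + (0, 0)) = id := funext fun w => add_zero w
    simpa [f, h0] using this
  have hsum := tendsto_finsetSum Finset.univ fun k _ => hlim k
  rw [Finset.sum_const_zero] at hsum
  have hev := (hsum.mono_left (nhdsWithin_le_nhds (s := Set.Ioi (0 : ℝ)))).eventually
    (gt_mem_nhds (zero_lt_one))
  obtain ⟨h, hlt, hpos⟩ := (hev.and self_mem_nhdsWithin).exists
  refine ⟨h, hpos, ?_⟩
  calc _ ≤ volume (A ∪ ⋃ k : Fin m,
        symmDiff ((fun w : ℝ × ℝ => w + (0, -((k : ℕ) * h))) ⁻¹' A) A) := by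
        refine measure_mono (Set.iUnion_subset fun k w hw => ?_)
        by_cases hwA : w ∈ A
        · exact Or.inl hwA
        · exact Or.inr (Set.mem_iUnion.2 ⟨k, Or.inl ⟨hw, hwA⟩⟩)
    _ ≤ volume A + volume (⋃ k : Fin m,
        symmDiff ((fun w : ℝ × ℝ => w + (0, -((k : ℕ) * h))) ⁻¹' A) A) := measure_union_le _ _
    _ ≤ volume A + 1 := by
        gcongr
        refine (measure_iUnion_le _).trans ?_
        rw [tsum_fintype]
        exact hlt.le

/-- The theorem in terms of the kernel `κ(x, t) = ∫ G(x, y) e^{2πiyt} dy`. -/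
lemma symbol_ae_zero {N : ℕ} {G : ℝ × ℝ → ℂ} (hGm : StronglyMeasurable G) (hG : Integrable G)
    (hfin : volume {w | G w ≠ 0} < ⊤)
    {q e : Fin N → Lp ℂ 2 (volume : Measure ℝ)} (he : Orthonormal ℂ e)
    (hk : ∀ᵐ x, ∀ᵐ t, FT 1 (fun y => G (x, y)) t
      = ∑ j, q j t * (starRingEnd ℂ) (e j (t + x))) :
    ∀ᵐ w, G w = 0 := by
  by_contra hne
  have hGi : ∀ᵐ x : ℝ, Integrable (fun y => G (x, y)) := Integrable.prod_right_ae hG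
  have hAm : MeasurableSet {w | G w ≠ 0} :=
    hGm.measurable (measurableSet_singleton 0).compl
  have htop : (N : ENNReal) * (volume {w | G w ≠ 0} + 1) ≠ ⊤ :=
    ENNReal.mul_ne_top (by simp) (ENNReal.add_ne_top.2 ⟨hfin.ne, by simp⟩)
  obtain ⟨m, hm⟩ := ENNReal.exists_nat_gt htop
  obtain ⟨h, hh, hvol⟩ := exists_small_step hAm hfin m
  let T : Fin m → ℝ × ℝ → ℂ := fun k w => G (w + (0, -((k : ℕ) * h)))
  have hTm : ∀ k, StronglyMeasurable (T k) := fun k =>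
    hGm.comp_measurable (by fun_prop)
  have hTi : ∀ k, Integrable (T k) := fun k => hG.comp_add_right _
  -- A combination of translates multiplies the kernel by a trigonometric polynomial in `t`.
  have hFT : ∀ c : Fin m → ℂ, ∀ᵐ x : ℝ, ∀ t,
      FT 1 (fun y => ∑ k, c k * T k (x, y)) t
        = trigPoly c h t * FT 1 (fun y => G (x, y)) t := by
    intro c
    filter_upwards [hGi] with x hx t
    have hterm : ∀ k : Fin m, FT 1 (fun y => T k (x, y)) t
        = cexp (2 * π * I * ((k : ℕ) * h : ℝ) * t) * FT 1 (fun y => G (x, y)) t := by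
      intro k
      rw [← FT_translate]
      simp [T]
    have hi : ∀ k : Fin m, Integrable (fun y : ℝ => c k * T k (x, y)
        * cexp (2 * π * I * (1 : ℝ) * y * t)) := by
      intro k
      have h1 : Integrable (fun y : ℝ => c k * T k (x, y)) := by
        refine Integrable.const_mul ?_ _
        simpa [T] using hx.comp_add_right (-((k : ℕ) * h))
      refine h1.mono (h1.1.mul (by fun_prop)) (.of_forall fun y => ?_)
      rw [norm_mul, norm_cexp_phase, mul_one]
    rw [trigPoly, Finset.sum_mul]
    rw [FT]
    simp_rw [Finset.sum_mul]
    rw [integral_finsetSum _ fun k _ => hi k]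
    refine Finset.sum_congr rfl fun k _ => ?_
    rw [mul_assoc (c k), ← hterm, FT, ← integral_const_mul]
    congr 1; ext y; ring
  have hcomb : ∀ c : Fin m → ℂ, MemLp (fun w => ∑ k, c k * T k w) 2 ∧
      ∀ᵐ w, ‖∑ k, c k * T k w‖ₑ ^ 2 ≤ N * ∫⁻ w, ‖∑ k, c k * T k w‖ₑ ^ 2 := by
    intro c
    have hqm : ∀ j, StronglyMeasurable (fun t => trigPoly c h t * q j t) := fun j =>
      (trigPoly_continuous c h).stronglyMeasurable.mul (Lp.stronglyMeasurable (q j))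
    refine symbol_bound (G := fun w => ∑ k, c k * T k w)
      (q := fun j t => trigPoly c h t * q j t) (e := e) ?_ ?_ hqm ?_ he ?_
    · exact Finset.stronglyMeasurable_fun_sum _ fun k _ => (hTm k).const_mul _
    · exact integrable_finsetSum _ fun k _ => (hTi k).const_mul _
    · intro j
      refine MemLp.of_le_mul (c := ∑ k, ‖c k‖) (Lp.memLp (q j)) (hqm j).aestronglyMeasurable
        (.of_forall fun t => ?_)
      rw [norm_mul]
      gcongr
      exact norm_trigPoly_le c h t
    · filter_upwards [hk, hFT c] with x hx hx2
      filter_upwards [hx] with t ht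
      rw [hx2 t, ht, Finset.mul_sum]
      simp_rw [mul_assoc]
  have hle := card_le_of_sup_bound (μ := volume) (N := N) (G := T)
    (S := ⋃ k : Fin m, (fun w : ℝ × ℝ => w + (0, -((k : ℕ) * h))) ⁻¹' {w | G w ≠ 0})
    (fun k => ?_) ?_ ?_ ?_ (fun c => (hcomb c).2)
  · refine absurd (hle.trans ?_) hm.not_ge
    gcongr
  · have h1 := (hcomb (Pi.single k 1)).1
    simpa [Pi.single_apply] using h1
  · exact MeasurableSet.iUnion fun k => hAm.preimage (by fun_prop)
  · intro k w hw
    by_contra hcon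
    exact hw (Set.mem_iUnion.2 ⟨k, hcon⟩)
  · intro c hc
    by_contra hc0
    refine hne ?_
    refine (Measure.ae_prod_iff_ae_ae (μ := (volume : Measure ℝ)) (ν := (volume : Measure ℝ))
      (p := fun w => G w = 0) ?_).2 ?_
    · exact hGm.measurable (measurableSet_singleton 0)
    have hc' : ∀ᵐ x : ℝ, ∀ᵐ y : ℝ, ∑ k, c k * T k (x, y) = 0 := Measure.ae_ae_of_ae_prod hc
    filter_upwards [hc', hFT c, hGi] with x hx hx2 hxi
    have hz : ∀ t, trigPoly c h t * FT 1 (fun y => G (x, y)) t = 0 := by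
      intro t
      rw [← hx2 t, FT_congr_ae (v := fun _ => 0) 1 hx]
      simp [FT]
    have hz2 : FT 1 (fun y => G (x, y)) =ᵐ[volume] fun _ => 0 := by
      filter_upwards [trigPoly_ae_ne_zero hc0 hh] with t ht
      exact (mul_eq_zero.1 (hz t)).resolve_left ht
    filter_upwards [FT_inversion hxi ((integrable_zero ℝ ℂ volume).congr hz2.symm)] with y hy
    rw [hy, FT_congr_ae (-1) hz2]
    simp [FT]

/-- Benedicks' theorem for the Weyl transform: if `f ∈ L¹(ℝ²)`, the set where `f` is nonzero
has finite Lebesgue measure, and the Weyl transform `W(f)`, i.e. the bounded operator `W` on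
`L²(ℝ)` satisfying `(W φ)(t) = ∬ f(x,y) e^{πi(xy+2yt)} φ(t+x) dx dy`, has finite rank,
then `f = 0` almost everywhere. -/
theorem benedicks_weyl (f : ℝ × ℝ → ℂ) (hf : Integrable f (volume : Measure (ℝ × ℝ)))
    (hfin : volume {w : ℝ × ℝ | f w ≠ 0} < ⊤)
    (W : Lp ℂ 2 (volume : Measure ℝ) →L[ℂ] Lp ℂ 2 (volume : Measure ℝ))
    (hW : ∀ φ : Lp ℂ 2 (volume : Measure ℝ), ∀ᵐ t : ℝ,
      (W φ : ℝ → ℂ) t =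
        ∫ w : ℝ × ℝ, f w * Complex.exp (π * Complex.I * (w.1 * w.2 + 2 * w.2 * t))
          * (φ : ℝ → ℂ) (t + w.1))
    (hrank : FiniteDimensional ℂ (LinearMap.range (W : Lp ℂ 2 (volume : Measure ℝ)
      →ₗ[ℂ] Lp ℂ 2 (volume : Measure ℝ)))) :
    f =ᵐ[volume] 0 := by
  -- Absorb the phase `e^{πixy}` into a strongly measurable representative of `f`.
  let f₀ : ℝ × ℝ → ℂ := hf.1.mk f
  have hff₀ : ∀ᵐ w, f w = f₀ w := hf.1.ae_eq_mk
  let G : ℝ × ℝ → ℂ := fun w => f₀ w * cexp (π * I * (w.1 * w.2))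
  have hGm : StronglyMeasurable G :=
    hf.1.stronglyMeasurable_mk.mul (Continuous.stronglyMeasurable (by fun_prop))
  have hG : Integrable G := by
    refine hf.mono hGm.aestronglyMeasurable ?_
    filter_upwards [hff₀] with w hw
    have : (π * I * (w.1 * w.2) : ℂ) = ((π * (w.1 * w.2) : ℝ) : ℂ) * I := by push_cast; ring
    simp only [G]
    rw [norm_mul, ← hw, this, Complex.norm_exp_ofReal_mul_I, mul_one]
  have hGfin : volume {w | G w ≠ 0} < ⊤ := by
    refine lt_of_le_of_lt (measure_mono_ae ?_) hfin
    filter_upwards [hff₀] with w hw hGw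
    change f w ≠ 0
    rw [hw]
    exact left_ne_zero_of_mul (show f₀ w * _ ≠ 0 from hGw)
  obtain ⟨N, q, e, he, hform⟩ := finite_rank_form W hrank
  have hk := kernel_form hGm hG W (fun φ => by
    filter_upwards [hW φ] with t ht
    rw [ht]
    refine integral_congr_ae ?_
    filter_upwards [hff₀] with w hw
    simp only [G]
    rw [hw, mul_assoc (f₀ w) (cexp _) (cexp _), ← Complex.exp_add]
    congr 3
    push_cast; ring) hform
  filter_upwards [symbol_ae_zero hGm hG hGfin he hk, hff₀] with w hw hw2
  rw [hw2]
  exact (mul_eq_zero.1 (show f₀ w * _ = 0 from hw)).resolve_right (Complex.exp_ne_zero _)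
end

section
/- If X is a finite rank (hence trace-class) operator on L²(ℝ) and the set {w ∈ ℝ² | α(X)(w) ≠ 0} has finite Lebesgue measure, then X = 0. -/
/-!
The argument is an Amrein–Berthier style dimension count. Let `V` be the range of `X`, with
orthonormal basis `e₁, …, e_r`, and put `gᵢ = X* eᵢ`. Then
`α(X)(w) = ∑ᵢ ⟨ρ(w) gᵢ, eᵢ⟩ = ⟨g, R(w)⟩` (`optrace_comp_adjoint`), where `g = (gᵢ)` and
`R(w) = (ρ(w)* eᵢ)` live in the Hilbert space `H = L²(ℝ)^r`. The map `h ↦ ⟨h, R(·)⟩` has three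
properties.

* Boundedness: `‖R(w)‖² ≤ r` for every `w`.
* Moyal's identity: `∫ |⟨h, R(w)⟩|² dw = ‖h‖²` (`IsWeyl.lintegral_sum_inner`). Up to a phase,
  `⟨h, R(x, y)⟩` is the Fourier transform in `t` of `∑ᵢ eᵢ(t) conj(hᵢ(t + x))`, so this is
  Plancherel followed by Tonelli.
* Covariance: `⟨ρ(u) h, R(w)⟩` and `⟨h, R(w + u)⟩` differ by a phase (`IsWeyl.apply_apply`).

By Bessel's inequality the first two properties bound by `r · |A|` the dimension of the space of
those `h` for which `⟨h, R(·)⟩` vanishes off `A` (`card_le_of_vanishingOff`). If `g ≠ 0` and the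
support `S` of `⟨g, R(·)⟩` has finite measure, then one can add to `S` translates of itself, one
after the other, each contributing a set of positive measure, while the total measure stays below
`|S| + 1` (`exists_small_translate`). Each translate contributes a vector `ρ(u) g` which is
independent of the previous ones, so the dimension is unbounded, a contradiction.
-/

open MeasureTheory Complex Real
open scoped InnerProductSpace

/-- An operator `A` on a complex Hilbert space is trace class iff for every Hilbert basis
`(e i)` the family `⟨e i, A (e i)⟩` is absolutely summable. -/
def IsTraceClass {E : Type} [NormedAddCommGroup E] [InnerProductSpace ℂ E] [CompleteSpace E]
    (A : E →L[ℂ] E) : Prop :=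
  ∀ (ι : Type) (b : HilbertBasis ι ℂ E), Summable fun i => ‖⟪b i, A (b i)⟫_ℂ‖

/-- The trace of a (trace-class) operator on a complex Hilbert space, computed as
`∑ᵢ ⟨eᵢ, A eᵢ⟩` in a chosen Hilbert basis. -/
noncomputable def optrace {E : Type} [NormedAddCommGroup E] [InnerProductSpace ℂ E]
    [CompleteSpace E] (A : E →L[ℂ] E) : ℂ :=
  ∑' i : (exists_hilbertBasis ℂ E).choose,
    ⟪((exists_hilbertBasis ℂ E).choose_spec.choose i : E),
      A ((exists_hilbertBasis ℂ E).choose_spec.choose i)⟫_ℂ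

open scoped FourierTransform SchwartzMap ContDiff ENNReal Topology symmDiff ComplexConjugate

/-! ### Plancherel on `L¹ ∩ L²` and small translates -/

/-- Plancherel's theorem for the Fourier integral of a function in `L¹ ∩ L²`. The Fourier integral
agrees a.e. with the `L²` Fourier transform, because both represent the same tempered
distribution. -/
lemma plancherel_lintegral {f : ℝ → ℂ} (hf1 : Integrable f) (hf2 : MemLp f 2) :
    ∫⁻ y, ‖𝓕 f y‖ₑ ^ 2 = ∫⁻ t, ‖f t‖ₑ ^ 2 := by
  set h : Lp ℂ 2 (volume : Measure ℝ) := 𝓕 (hf2.toLp f) with hh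
  have hcont : Continuous (𝓕 f) :=
    VectorFourier.fourierIntegral_continuous Real.continuous_fourierChar
      (innerSL ℝ).continuous₂ hf1
  have hae : (h : ℝ → ℂ) =ᵐ[volume] 𝓕 f := by
    apply ae_eq_of_integral_contDiff_smul_eq
    · exact (Lp.memLp h).locallyIntegrable one_le_two
    · exact hcont.locallyIntegrable
    · intro g g_smooth g_cpt
      have hg₁ : HasCompactSupport (Complex.ofRealCLM ∘ g) := g_cpt.comp_left rfl
      have hg₂ : ContDiff ℝ ∞ (Complex.ofRealCLM ∘ g) := by fun_prop
      set G : 𝓢(ℝ, ℂ) := hg₁.toSchwartzMap hg₂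
      have h1 : (Lp.toTemperedDistribution h) G = ∫ x, g x • h x := by
        simp [G, Lp.toTemperedDistribution_apply]
      have h2 : (Lp.toTemperedDistribution h) G = ∫ x, (𝓕 G) x • f x := by
        have e := congrArg (fun D : TemperedDistribution ℝ ℂ => D G)
          (Lp.fourier_toTemperedDistribution_eq (hf2.toLp f))
        rw [hh, ← e, TemperedDistribution.fourier_apply]
        refine (Lp.toTemperedDistribution_apply _ _).trans ?_
        apply integral_congr_ae
        filter_upwards [hf2.coeFn_toLp] with x hx
        rw [hx]
      have h3 : ∫ x, (𝓕 G) x • f x = ∫ x, G x • (𝓕 f) x := by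
        rw [SchwartzMap.fourier_coe]
        have h4 := VectorFourier.integral_fourierIntegral_smul_eq_flip
          (L := innerₗ ℝ) Real.continuous_fourierChar (innerSL ℝ).continuous₂
          (G.integrable (μ := volume)) hf1
        rwa [flip_innerₗ] at h4
      rw [← h1, h2, h3]
      simp [G]
  have e1 : ∫⁻ y, ‖𝓕 f y‖ₑ ^ 2 = ‖h‖ₑ ^ 2 := by
    rw [Lp.enorm_def, eLpNorm_congr_ae hae]
    have := eLpNorm_nnreal_pow_eq_lintegral (f := 𝓕 f) (μ := volume) (p := 2) (by norm_num)
    simpa using this.symm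
  have e2 : ∫⁻ y, ‖f y‖ₑ ^ 2 = ‖hf2.toLp f‖ₑ ^ 2 := by
    rw [Lp.enorm_def, eLpNorm_congr_ae hf2.coeFn_toLp]
    have := eLpNorm_nnreal_pow_eq_lintegral (f := f) (μ := volume) (p := 2) (by norm_num)
    simpa using this.symm
  rw [e1, e2]
  have : ‖h‖ = ‖hf2.toLp f‖ := Lp.norm_fourier_eq _
  rw [← ofReal_norm, ← ofReal_norm, this]

/-- A set `S` of positive finite measure has a translate which exceeds a given set `A ⊇ S` of
finite measure by a set of small positive measure: `u ↦ |(S - u) \ A|` is continuous, vanishes at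
`0`, and does not vanish identically. -/
lemma exists_small_translate {S A : Set (ℝ × ℝ)} (hS : MeasurableSet S) (hA : MeasurableSet A)
    (hS0 : volume S ≠ 0) (hSt : volume S ≠ ⊤) (hAt : volume A ≠ ⊤) (hSA : S ⊆ A)
    {δ : ℝ≥0∞} (hδ : 0 < δ) :
    ∃ u : ℝ × ℝ, volume (((fun w => w + u) ⁻¹' S) \ A) ≠ 0 ∧
      volume (((fun w => w + u) ⁻¹' S) \ A) < δ := by
  set T : ℝ × ℝ → Set (ℝ × ℝ) := fun u => (fun w => w + u) ⁻¹' S with hT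
  have hTm : ∀ u, MeasurableSet (T u) := fun u => (measurable_add_const u) hS
  have hTv : ∀ u, volume (T u) = volume S := fun u => measure_preimage_add_right volume u S
  have hcont : Continuous fun u => volume (T u \ A) := by
    have key : ∀ u v, volume (T u \ A) ≤ volume (T v \ A) + volume (T u ∆ T v) := by
      intro u v
      refine (measure_mono ?_).trans (measure_union_le _ _)
      intro w hw
      by_cases h : w ∈ T v
      · exact Or.inl ⟨h, hw.2⟩
      · exact Or.inr (Or.inl ⟨hw.1, h⟩)
    have hlim : ∀ u, Filter.Tendsto (fun v => volume (T v ∆ T u)) (𝓝 u) (𝓝 0) := by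
      intro u
      let F : ℝ × ℝ → C(ℝ × ℝ, ℝ × ℝ) := fun v => ⟨fun w => w + v, by fun_prop⟩
      have hF : Continuous F := by
        apply ContinuousMap.continuous_of_continuous_uncurry
        simp only [F, Function.uncurry_def, ContinuousMap.coe_mk]
        fun_prop
      exact tendsto_measure_symmDiff_preimage_nhds_zero (f := F) (g := F u) (hF.tendsto u)
        (Filter.Eventually.of_forall fun v => measurePreserving_add_right volume v)
        (measurePreserving_add_right volume u) hS.nullMeasurableSet hSt
    rw [continuous_iff_continuousAt]
    intro u
    have hne : volume (T u \ A) ≠ ⊤ :=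
      ne_top_of_le_ne_top (by rw [hTv]; exact hSt) (measure_mono Set.sdiff_subset)
    rw [ContinuousAt, ENNReal.tendsto_nhds hne]
    intro ε hε
    filter_upwards [(ENNReal.tendsto_nhds_zero.1 (hlim u)) ε hε] with v hv
    constructor
    · rw [tsub_le_iff_right]
      refine (key u v).trans ?_
      rw [symmDiff_comm]
      gcongr
    · exact (key v u).trans (by gcongr)
  have h0 : volume (T 0 \ A) = 0 := by
    simp [T, Set.sdiff_eq_empty.2 hSA]
  have h1 : ∃ u, volume (T u \ A) ≠ 0 := by
    -- Otherwise `|(S - u) ∩ A| = |S|` for all `u`, although its integral over `u` is `|S| |A| < ∞`.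
    by_contra! hz
    have e1 : ∀ u, volume (T u ∩ A) = volume S := by
      intro u
      rw [← hTv u, ← measure_inter_add_sdiff (T u) hA, hz, add_zero]
    have e2 : ∫⁻ u, volume (T u ∩ A) = volume S * volume A := by
      have : ∀ u, volume (T u ∩ A) = ∫⁻ w, A.indicator 1 w * S.indicator 1 (w + u) := by
        intro u
        rw [← lintegral_indicator_one ((hTm u).inter hA)]
        congr 1; ext w
        by_cases h : w ∈ A <;> by_cases h' : w + u ∈ S <;> simp [T, h, h', Set.indicator]
      simp_rw [this]
      rw [lintegral_lintegral_swap]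
      · have : ∀ w : ℝ × ℝ, ∫⁻ u, A.indicator (1 : ℝ × ℝ → ℝ≥0∞) w * S.indicator 1 (w + u)
            = A.indicator 1 w * volume S := by
          intro w
          have hm : Measurable fun u => S.indicator (1 : ℝ × ℝ → ℝ≥0∞) (w + u) :=
            (measurable_one.indicator hS).comp (measurable_const_add w)
          rw [lintegral_const_mul _ hm,
            lintegral_add_left_eq_self (fun u => S.indicator 1 u) w, lintegral_indicator_one hS]
        simp_rw [this]
        rw [lintegral_mul_const _ (measurable_one.indicator hA), lintegral_indicator_one hA,
          mul_comm]
      · apply Measurable.aemeasurable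
        exact ((measurable_one.indicator hA).comp measurable_snd).mul
          ((measurable_one.indicator hS).comp (measurable_snd.add measurable_fst))
    simp_rw [e1] at e2
    rw [lintegral_const] at e2
    have : (volume : Measure (ℝ × ℝ)) Set.univ = ⊤ := by
      rw [Measure.volume_eq_prod, ← Set.univ_prod_univ, Measure.prod_prod]; simp
    rw [this, ENNReal.mul_top hS0] at e2
    exact ENNReal.mul_ne_top hSt hAt e2.symm
  obtain ⟨u1, hu1⟩ := h1
  obtain ⟨c, hc0, hc⟩ := exists_between (lt_min hδ (pos_iff_ne_zero.2 hu1))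
  obtain ⟨u, hu⟩ := mem_range_of_exists_le_of_exists_ge hcont
    (c := c) ⟨0, by rw [h0]; exact zero_le⟩ ⟨u1, (hc.trans_le (min_le_right _ _)).le⟩
  exact ⟨u, by rw [show volume (T u \ A) = c from hu]; exact hc0.ne',
    by rw [show volume (T u \ A) = c from hu]; exact hc.trans_le (min_le_left _ _)⟩

/-! ### Weyl operators and Moyal's identity -/

lemma lintegral_enorm_sq_eq (f : Lp ℂ 2 (volume : Measure ℝ)) :
    ∫⁻ t, ‖f t‖ₑ ^ 2 = ‖f‖ₑ ^ 2 := by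
  rw [Lp.enorm_def]
  have := eLpNorm_nnreal_pow_eq_lintegral (f := f) (μ := volume) (p := 2) (by norm_num)
  simpa using this.symm

/-- The family `ρ` consists of the Weyl operators `(ρ(x, y)φ)(t) = e^{πi(xy + 2yt)} φ(t + x)`. -/
def IsWeyl (ρ : ℝ × ℝ → (Lp ℂ 2 (volume : Measure ℝ) →L[ℂ] Lp ℂ 2 (volume : Measure ℝ))) : Prop :=
  ∀ w : ℝ × ℝ, ∀ φ : Lp ℂ 2 (volume : Measure ℝ), ∀ᵐ t : ℝ,
      (ρ w φ : ℝ → ℂ) t =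
        Complex.exp (π * Complex.I * (w.1 * w.2 + 2 * w.2 * t)) * (φ : ℝ → ℂ) (t + w.1)

section
variable {ρ : ℝ × ℝ → (Lp ℂ 2 (volume : Measure ℝ) →L[ℂ] Lp ℂ 2 (volume : Measure ℝ))}
  {ι : Type} [Fintype ι]

lemma IsWeyl.norm_apply (hρ : IsWeyl ρ) (w : ℝ × ℝ) (φ : Lp ℂ 2 (volume : Measure ℝ)) :
    ‖ρ w φ‖ = ‖φ‖ := by
  have h : eLpNorm (ρ w φ) 2 volume = eLpNorm φ 2 volume := by
    rw [← eLpNorm_comp_measurePreserving (Lp.aestronglyMeasurable φ)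
      (measurePreserving_add_right volume w.1)]
    apply eLpNorm_congr_norm_ae
    filter_upwards [hρ w φ] with t ht
    have : (π * Complex.I * (w.1 * w.2 + 2 * w.2 * t) : ℂ)
        = ((π * (w.1 * w.2 + 2 * w.2 * t) : ℝ) : ℂ) * Complex.I := by
      push_cast; ring
    rw [ht, norm_mul, this, Complex.norm_exp_ofReal_mul_I, one_mul]
    rfl
  rw [Lp.norm_def, Lp.norm_def, h]

/-- The Weyl operators form a projective representation of `ℝ²`. -/
lemma IsWeyl.apply_apply (hρ : IsWeyl ρ) (w u : ℝ × ℝ) (φ : Lp ℂ 2 (volume : Measure ℝ)) :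
    ρ w (ρ u φ) = Complex.exp (π * Complex.I * (u.2 * w.1 - u.1 * w.2)) • ρ (w + u) φ := by
  apply Lp.ext
  have h2 := (measurePreserving_add_right volume w.1).quasiMeasurePreserving.ae (hρ u φ)
  filter_upwards [hρ w (ρ u φ), h2, hρ (w + u) φ,
    Lp.coeFn_smul (Complex.exp (π * Complex.I * (u.2 * w.1 - u.1 * w.2))) (ρ (w + u) φ)]
    with t h1 h2 h3 h4
  rw [h1, h2, h4, Pi.smul_apply, h3, smul_eq_mul, ← mul_assoc, ← mul_assoc, ← Complex.exp_add,
    ← Complex.exp_add]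
  congr 2
  · simp only [Prod.fst_add, Prod.snd_add]
    push_cast; ring
  · simp only [Prod.fst_add]; ring

/-- The function `k_x(t) = ∑ᵢ eᵢ(t) conj(hᵢ(t + x))`, whose Fourier transform in `t` is, up to a
phase, `∑ᵢ ⟨ρ(x, y) hᵢ, eᵢ⟩`. -/
noncomputable def crossKernel (e h : ι → Lp ℂ 2 (volume : Measure ℝ)) (x t : ℝ) : ℂ :=
  ∑ i, e i t * conj (h i (t + x))

lemma measurable_crossKernel (e h : ι → Lp ℂ 2 (volume : Measure ℝ)) :
    Measurable fun p : ℝ × ℝ => crossKernel e h p.1 p.2 := by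
  unfold crossKernel
  refine Finset.measurable_sum _ fun i _ => ?_
  have h1 := (Lp.stronglyMeasurable (e i)).measurable
  have h2 := (Lp.stronglyMeasurable (h i)).measurable
  refine (h1.comp measurable_snd).mul ?_
  exact Complex.continuous_conj.measurable.comp (h2.comp (measurable_snd.add measurable_fst))

lemma integrable_crossKernel_term (e h : Lp ℂ 2 (volume : Measure ℝ)) (x : ℝ) :
    Integrable fun t => e t * conj (h (t + x)) := by
  have h2 : MemLp (fun t => conj (h (t + x))) 2 volume :=
    ((Lp.memLp h).comp_measurePreserving (measurePreserving_add_right volume x)).star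
  exact (Lp.memLp e).integrable_mul h2

lemma IsWeyl.sum_inner_eq (hρ : IsWeyl ρ) (e h : ι → Lp ℂ 2 (volume : Measure ℝ)) (w : ℝ × ℝ) :
    ∑ i, ⟪ρ w (h i), e i⟫_ℂ =
      Complex.exp ((-(π * w.1 * w.2) : ℝ) * Complex.I) * 𝓕 (crossKernel e h w.1) w.2 := by
  have h1 : 𝓕 (crossKernel e h w.1) w.2 =
      ∑ i, ∫ t, Complex.exp ((-2 * π * t * w.2 : ℝ) * Complex.I) *
        (e i t * conj (h i (t + w.1))) := by
    rw [Real.fourier_real_eq_integral_exp_smul, ← integral_finsetSum]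
    · simp only [crossKernel, smul_eq_mul, Finset.mul_sum]
    · intro i _
      refine (integrable_crossKernel_term (e i) (h i) w.1).bdd_mul (c := 1) ?_ ?_
      · exact Continuous.aestronglyMeasurable (by fun_prop)
      · exact Filter.Eventually.of_forall fun t => by rw [Complex.norm_exp_ofReal_mul_I]
  rw [h1, Finset.mul_sum]
  refine Finset.sum_congr rfl fun i _ => ?_
  rw [L2.inner_def, ← integral_const_mul]
  apply integral_congr_ae
  filter_upwards [hρ w (h i)] with t ht
  rw [ht, RCLike.inner_apply, map_mul, ← Complex.exp_conj, ← mul_assoc, ← mul_assoc, ← mul_assoc,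
    ← Complex.exp_add, mul_comm (e i t)]
  congr 3
  simp only [map_mul, map_add, Complex.conj_ofReal, Complex.conj_I, map_ofNat]
  push_cast
  ring

lemma lintegral_orthonormal_sum {e : ι → Lp ℂ 2 (volume : Measure ℝ)} (he : Orthonormal ℂ e)
    (c : ι → ℂ) : ∫⁻ t, ‖∑ i, e i t * c i‖ₑ ^ 2 = ∑ i, ‖c i‖ₑ ^ 2 := by
  have h1 : ∫⁻ t, ‖∑ i, e i t * c i‖ₑ ^ 2 = ‖∑ i, c i • e i‖ₑ ^ 2 := by
    rw [← lintegral_enorm_sq_eq]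
    apply lintegral_congr_ae
    have h : ∀ᵐ t : ℝ, ∀ i, (c i • e i : Lp ℂ 2 (volume : Measure ℝ)) t = c i * e i t := by
      rw [ae_all_iff]
      intro i
      filter_upwards [Lp.coeFn_smul (c i) (e i)] with t ht
      simpa using ht
    filter_upwards [h, Lp.coeFn_finsetSum Finset.univ (fun i => c i • e i)] with t ht hs
    rw [hs, Finset.sum_apply]
    simp only [ht, mul_comm]
  have h2 : ‖∑ i, c i • e i‖ ^ 2 = ∑ i, ‖c i‖ ^ 2 := by
    have := he.inner_sum c c Finset.univ
    rw [inner_self_eq_norm_sq_to_K] at this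
    simp only [RCLike.conj_mul] at this
    exact_mod_cast this
  rw [h1, ← ofReal_norm, ← ENNReal.ofReal_pow (norm_nonneg _), h2,
    ENNReal.ofReal_sum_of_nonneg (fun _ _ => by positivity)]
  refine Finset.sum_congr rfl fun i _ => ?_
  rw [ENNReal.ofReal_pow (norm_nonneg _), ofReal_norm]

lemma lintegral_crossKernel {e : ι → Lp ℂ 2 (volume : Measure ℝ)} (he : Orthonormal ℂ e)
    (h : ι → Lp ℂ 2 (volume : Measure ℝ)) :
    ∫⁻ x, ∫⁻ t, ‖crossKernel e h x t‖ₑ ^ 2 = ∑ i, ‖h i‖ₑ ^ 2 := by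
  have hm := (measurable_crossKernel e h).enorm.pow_const 2
  have hm' : Measurable fun p : ℝ × ℝ => ‖∑ i, e i p.1 * conj (h i p.2)‖ₑ ^ 2 := by
    refine (Finset.measurable_sum _ fun i _ => ?_).enorm.pow_const 2
    have h1 := (Lp.stronglyMeasurable (e i)).measurable
    have h2 := (Lp.stronglyMeasurable (h i)).measurable
    exact (h1.comp measurable_fst).mul
      (Complex.continuous_conj.measurable.comp (h2.comp measurable_snd))
  rw [lintegral_lintegral_swap hm.aemeasurable]
  -- Substitute `s = t + x`; orthonormality of `e` then evaluates the integral over `t`.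
  have h1 : ∀ t, ∫⁻ x, ‖crossKernel e h x t‖ₑ ^ 2 = ∫⁻ s, ‖∑ i, e i t * conj (h i s)‖ₑ ^ 2 :=
    fun t => lintegral_add_left_eq_self (fun s => ‖∑ i, e i t * conj (h i s)‖ₑ ^ 2) t
  simp_rw [h1]
  rw [lintegral_lintegral_swap hm'.aemeasurable]
  simp_rw [lintegral_orthonormal_sum he, RCLike.enorm_conj]
  rw [lintegral_finsetSum]
  · simp_rw [lintegral_enorm_sq_eq]
  · intro i _
    exact (Lp.stronglyMeasurable (h i)).measurable.enorm.pow_const 2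

lemma measurable_fourier_crossKernel (e h : ι → Lp ℂ 2 (volume : Measure ℝ)) :
    Measurable fun w : ℝ × ℝ => 𝓕 (crossKernel e h w.1) w.2 := by
  simp_rw [Real.fourier_real_eq_integral_exp_smul]
  apply StronglyMeasurable.measurable
  refine StronglyMeasurable.integral_prod_right
    (f := fun (w : ℝ × ℝ) (t : ℝ) => Complex.exp ((-2 * π * t * w.2 : ℝ) * Complex.I) •
      crossKernel e h w.1 t) ?_
  apply Measurable.stronglyMeasurable
  have h1 : Measurable fun p : (ℝ × ℝ) × ℝ =>
      Complex.exp ((-2 * π * p.2 * p.1.2 : ℝ) * Complex.I) :=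
    Continuous.measurable (by fun_prop)
  exact h1.smul ((measurable_crossKernel e h).comp
    ((measurable_fst.comp measurable_fst).prodMk measurable_snd))

lemma IsWeyl.measurable_sum_inner (hρ : IsWeyl ρ) (e h : ι → Lp ℂ 2 (volume : Measure ℝ)) :
    Measurable fun w => ∑ i, ⟪ρ w (h i), e i⟫_ℂ := by
  simp_rw [hρ.sum_inner_eq]
  refine Measurable.mul ?_ (measurable_fourier_crossKernel e h)
  exact Continuous.measurable (by fun_prop)

/-- Moyal's identity. -/
lemma IsWeyl.lintegral_sum_inner (hρ : IsWeyl ρ) {e : ι → Lp ℂ 2 (volume : Measure ℝ)}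
    (he : Orthonormal ℂ e) (h : ι → Lp ℂ 2 (volume : Measure ℝ)) :
    ∫⁻ w, ‖∑ i, ⟪ρ w (h i), e i⟫_ℂ‖ₑ ^ 2 = ∑ i, ‖h i‖ₑ ^ 2 := by
  have h1 : ∀ w, ‖∑ i, ⟪ρ w (h i), e i⟫_ℂ‖ₑ = ‖𝓕 (crossKernel e h w.1) w.2‖ₑ := by
    intro w
    rw [hρ.sum_inner_eq, enorm_mul, ← ofReal_norm (Complex.exp _), Complex.norm_exp_ofReal_mul_I]
    simp
  simp_rw [h1]
  have hm := (measurable_fourier_crossKernel e h).enorm.pow_const 2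
  rw [Measure.volume_eq_prod, lintegral_prod _ hm.aemeasurable, ← lintegral_crossKernel he h]
  apply lintegral_congr_ae
  have hmk := (measurable_crossKernel e h).enorm.pow_const 2
  -- Plancherel needs `k_x ∈ L²`, which holds for a.e. `x` only.
  have hfin : ∀ᵐ x : ℝ, ∫⁻ t, ‖crossKernel e h x t‖ₑ ^ 2 < ⊤ := by
    refine ae_lt_top hmk.lintegral_prod_right' ?_
    rw [lintegral_crossKernel he h]
    exact ENNReal.sum_ne_top.2 fun i _ => by simp
  filter_upwards [hfin] with x hx
  have hmx : Measurable (crossKernel e h x) :=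
    (measurable_crossKernel e h).comp measurable_prodMk_left
  refine plancherel_lintegral ?_ ⟨hmx.aestronglyMeasurable, ?_⟩
  · exact integrable_finsetSum _ fun i _ => integrable_crossKernel_term (e i) (h i) x
  · have := eLpNorm_nnreal_pow_eq_lintegral (f := crossKernel e h x) (μ := volume) (p := 2)
      (by norm_num)
    simp only [NNReal.coe_ofNat, ENNReal.rpow_ofNat] at this
    rw [← this] at hx
    simpa using hx

end

/-! ### The dimension count -/

section
variable {H : Type} [NormedAddCommGroup H] [InnerProductSpace ℂ H] {R : ℝ × ℝ → H}

/-- The vectors `h` for which `w ↦ ⟨h, R w⟩` vanishes almost everywhere outside `A`. -/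
def vanishingOff (R : ℝ × ℝ → H) (A : Set (ℝ × ℝ)) : Submodule ℂ H where
  carrier := {h | ∀ᵐ w, w ∉ A → ⟪h, R w⟫_ℂ = 0}
  zero_mem' := by simp
  add_mem' := by
    intro a b ha hb
    change ∀ᵐ w, w ∉ A → ⟪a + b, R w⟫_ℂ = 0
    change ∀ᵐ w, w ∉ A → ⟪a, R w⟫_ℂ = 0 at ha
    change ∀ᵐ w, w ∉ A → ⟪b, R w⟫_ℂ = 0 at hb
    filter_upwards [ha, hb] with w h1 h2 hw
    rw [inner_add_left, h1 hw, h2 hw, add_zero]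
  smul_mem' := by
    intro c a ha
    change ∀ᵐ w, w ∉ A → ⟪c • a, R w⟫_ℂ = 0
    change ∀ᵐ w, w ∉ A → ⟪a, R w⟫_ℂ = 0 at ha
    filter_upwards [ha] with w h1 hw
    rw [inner_smul_left, h1 hw, mul_zero]

lemma vanishingOff_mono {A B : Set (ℝ × ℝ)} (hAB : A ⊆ B) :
    vanishingOff R A ≤ vanishingOff R B := by
  intro h hh
  have hh' : ∀ᵐ w, w ∉ A → ⟪h, R w⟫_ℂ = 0 := hh
  change ∀ᵐ w, w ∉ B → ⟪h, R w⟫_ℂ = 0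
  filter_upwards [hh'] with w hw hB
  exact hw fun hA => hB (hAB hA)

/-- If `h ↦ ⟨h, R(·)⟩` is isometric into `L²(ℝ²)` and `‖R w‖² ≤ C`, then `vanishingOff R A` has
dimension at most `C |A|`: integrate Bessel's inequality for an orthonormal family over `A`. -/
lemma card_le_of_vanishingOff {C : ℝ≥0∞} (hbd : ∀ w, ‖R w‖ₑ ^ 2 ≤ C)
    (hmeas : ∀ h, Measurable fun w => ⟪h, R w⟫_ℂ)
    (hiso : ∀ h, ∫⁻ w, ‖⟪h, R w⟫_ℂ‖ₑ ^ 2 = ‖h‖ₑ ^ 2)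
    {A : Set (ℝ × ℝ)} (hA : MeasurableSet A) {n : ℕ} {v : Fin n → H}
    (hv : LinearIndependent ℂ v) (hvA : ∀ i, v i ∈ vanishingOff R A) :
    (n : ℝ≥0∞) ≤ C * volume A := by
  set U := Submodule.span ℂ (Set.range v)
  have hUA : U ≤ vanishingOff R A := by
    rw [Submodule.span_le]
    rintro _ ⟨i, rfl⟩
    exact hvA i
  have hn : Module.finrank ℂ U = n := by simpa using finrank_span_eq_card hv
  have : FiniteDimensional ℂ U := FiniteDimensional.span_of_finite ℂ (Set.finite_range v)
  set b := stdOrthonormalBasis ℂ U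
  have hb : Orthonormal ℂ fun i => (b i : H) :=
    b.orthonormal.comp_linearIsometry U.subtypeₗᵢ
  have hone : ∀ i, ∫⁻ w in A, ‖⟪(b i : H), R w⟫_ℂ‖ₑ ^ 2 = 1 := by
    intro i
    have h1 : ∀ᵐ w, w ∉ A → ⟪(b i : H), R w⟫_ℂ = 0 := hUA (b i).2
    have h2 : ∫⁻ w in Aᶜ, ‖⟪(b i : H), R w⟫_ℂ‖ₑ ^ 2 = 0 := by
      rw [setLIntegral_congr_fun_ae (g := fun _ => 0) hA.compl]
      · simp
      · filter_upwards [h1] with w hw hwA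
        simp [hw hwA]
    have h3 := lintegral_add_compl (μ := volume) (fun w => ‖⟪(b i : H), R w⟫_ℂ‖ₑ ^ 2) hA
    rw [h2, add_zero, hiso] at h3
    have h4 : ‖(b i : H)‖ = 1 := hb.1 i
    rw [h3, ← ofReal_norm, h4]
    simp
  calc (n : ℝ≥0∞) = ∑ i, ∫⁻ w in A, ‖⟪(b i : H), R w⟫_ℂ‖ₑ ^ 2 := by
        simp [hone, hn]
    _ = ∫⁻ w in A, ∑ i, ‖⟪(b i : H), R w⟫_ℂ‖ₑ ^ 2 := by
        rw [lintegral_finsetSum]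
        exact fun i _ => (hmeas _).enorm.pow_const 2
    _ ≤ ∫⁻ _ in A, C := by
        refine lintegral_mono fun w => le_trans ?_ (hbd w)
        have := hb.sum_inner_products_le (R w) (s := Finset.univ)
        have h5 := ENNReal.ofReal_le_ofReal this
        rw [ENNReal.ofReal_sum_of_nonneg (fun _ _ => by positivity)] at h5
        simpa [ENNReal.ofReal_pow] using h5
    _ = C * volume A := by simp

/-- The Amrein–Berthier argument in abstract form: if in addition the supports of the functions
`⟨h, R(·)⟩` can be translated (`htrans`), then only `h = 0` has a support of finite measure. -/
lemma eq_zero_of_volume_support_lt_top {C : ℝ≥0∞} (hC : C ≠ ⊤) (hbd : ∀ w, ‖R w‖ₑ ^ 2 ≤ C)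
    (hmeas : ∀ h, Measurable fun w => ⟪h, R w⟫_ℂ)
    (hiso : ∀ h, ∫⁻ w, ‖⟪h, R w⟫_ℂ‖ₑ ^ 2 = ‖h‖ₑ ^ 2)
    (htrans : ∀ h u, ∃ h', ∀ w, ⟪h', R w⟫_ℂ = 0 ↔ ⟪h, R (w + u)⟫_ℂ = 0)
    (g : H) (hg : volume {w | ⟪g, R w⟫_ℂ ≠ 0} < ⊤) : g = 0 := by
  set S : Set (ℝ × ℝ) := {w | ⟪g, R w⟫_ℂ ≠ 0} with hSdef
  have hS : MeasurableSet S := (hmeas g) (measurableSet_singleton (0 : ℂ)).compl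
  by_cases hS0 : volume S = 0
  · have h1 : ∫⁻ w, ‖⟪g, R w⟫_ℂ‖ₑ ^ 2 = 0 := by
      rw [lintegral_eq_zero_iff ((hmeas g).enorm.pow_const 2)]
      have : ∀ᵐ w, w ∉ S := measure_eq_zero_iff_ae_notMem.1 hS0
      filter_upwards [this] with w hw
      have : ⟪g, R w⟫_ℂ = 0 := by simpa [S] using hw
      simp [this]
    rw [hiso] at h1
    simpa using h1
  exfalso
  have key : ∀ n : ℕ, ∃ A : Set (ℝ × ℝ), MeasurableSet A ∧ S ⊆ A ∧ volume A < volume S + 1 ∧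
      ∃ v : Fin n → H, LinearIndependent ℂ v ∧ ∀ i, v i ∈ vanishingOff R A := by
    intro n
    induction n with
    | zero =>
      refine ⟨S, hS, subset_rfl, ENNReal.lt_add_right hg.ne one_ne_zero, Fin.elim0, ?_, ?_⟩
      · exact linearIndependent_empty_type
      · exact fun i => i.elim0
    | succ n ih =>
      obtain ⟨A, hA, hSA, hAlt, v, hv, hvA⟩ := ih
      obtain ⟨u, hu0, hu⟩ := exists_small_translate hS hA hS0 hg.ne hAlt.ne_top hSA
        (tsub_pos_of_lt hAlt)
      set T := (fun w => w + u) ⁻¹' S with hT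
      have hTm : MeasurableSet T := (measurable_add_const u) hS
      obtain ⟨h', hh'⟩ := htrans g u
      refine ⟨A ∪ T, hA.union hTm, hSA.trans Set.subset_union_left, ?_, Fin.cons h' v,
        hv.finCons ?_, ?_⟩
      · calc volume (A ∪ T) = volume (A ∪ (T \ A)) := by rw [Set.union_sdiff_self]
          _ ≤ volume A + volume (T \ A) := measure_union_le _ _
          _ < volume A + (volume S + 1 - volume A) :=
            ENNReal.add_lt_add_left hAlt.ne_top hu
          _ = volume S + 1 := add_tsub_cancel_of_le hAlt.le
      · intro hmem
        have hle : Submodule.span ℂ (Set.range v) ≤ vanishingOff R A := by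
          rw [Submodule.span_le]
          rintro _ ⟨i, rfl⟩
          exact hvA i
        have hae : ∀ᵐ w, w ∉ A → ⟪h', R w⟫_ℂ = 0 := hle hmem
        apply hu0
        rw [measure_eq_zero_iff_ae_notMem]
        filter_upwards [hae] with w hw hwT
        exact hwT.1 ((hh' w).1 (hw hwT.2))
      · intro i
        refine Fin.cases ?_ (fun j => ?_) i
        · rw [Fin.cons_zero]
          change ∀ᵐ w, w ∉ A ∪ T → ⟪h', R w⟫_ℂ = 0
          refine Filter.Eventually.of_forall fun w hw => ?_
          rw [hh' w]
          by_contra hne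
          exact hw (Or.inr hne)
        · rw [Fin.cons_succ]
          exact vanishingOff_mono Set.subset_union_left (hvA j)
  have hfin : C * (volume S + 1) ≠ ⊤ :=
    ENNReal.mul_ne_top hC (ENNReal.add_ne_top.2 ⟨hg.ne, ENNReal.one_ne_top⟩)
  obtain ⟨n, hn⟩ := ENNReal.exists_nat_gt hfin
  obtain ⟨A, hA, -, hAlt, v, hv, hvA⟩ := key n
  have := card_le_of_vanishingOff hbd hmeas hiso hA hv hvA
  exact absurd (this.trans (by gcongr)) hn.not_ge

end

/-! ### The trace formula and the conclusion -/

/-- The trace of `X B*` when `e` reproduces the range of `X`, as an orthonormal basis of it does. -/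
lemma optrace_comp_adjoint {E : Type} [NormedAddCommGroup E] [InnerProductSpace ℂ E]
    [CompleteSpace E] {ι : Type} [Fintype ι] (X B : E →L[ℂ] E) (e : ι → E)
    (hX : ∀ φ, X φ = ∑ i, ⟪e i, X φ⟫_ℂ • e i) :
    optrace (X ∘L ContinuousLinearMap.adjoint B) =
      ∑ i, ⟪B (ContinuousLinearMap.adjoint X (e i)), e i⟫_ℂ := by
  unfold optrace
  set b := (exists_hilbertBasis ℂ E).choose_spec.choose
  apply HasSum.tsum_eq
  have h := hasSum_sum (s := Finset.univ) fun i _ =>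
    b.hasSum_inner_mul_inner (B (ContinuousLinearMap.adjoint X (e i))) (e i)
  refine h.congr_fun fun j => ?_
  rw [ContinuousLinearMap.comp_apply, hX, inner_sum]
  refine Finset.sum_congr rfl fun i _ => ?_
  rw [inner_smul_right, ← ContinuousLinearMap.adjoint_inner_left,
    ContinuousLinearMap.adjoint_inner_right]

/-- Benedicks' theorem for the modified Fourier–Wigner transform: if `X` is a finite rank
(hence trace-class) operator on `L²(ℝ)` and the set where `α(X)(w) = tr(X ρ(w)*)` is nonzero
has finite Lebesgue measure, then `X = 0`.  Here `ρ(x,y)` is the Weyl operator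
`(ρ(x,y)φ)(t) = e^{πi(xy+2yt)} φ(t+x)`. -/
theorem benedicks_fourierWigner
    (ρ : ℝ × ℝ → (Lp ℂ 2 (volume : Measure ℝ) →L[ℂ] Lp ℂ 2 (volume : Measure ℝ)))
    (hρ : ∀ w : ℝ × ℝ, ∀ φ : Lp ℂ 2 (volume : Measure ℝ), ∀ᵐ t : ℝ,
      (ρ w φ : ℝ → ℂ) t =
        Complex.exp (π * Complex.I * (w.1 * w.2 + 2 * w.2 * t)) * (φ : ℝ → ℂ) (t + w.1))
    (X : Lp ℂ 2 (volume : Measure ℝ) →L[ℂ] Lp ℂ 2 (volume : Measure ℝ))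
    (hrank : FiniteDimensional ℂ (LinearMap.range (X : Lp ℂ 2 (volume : Measure ℝ)
      →ₗ[ℂ] Lp ℂ 2 (volume : Measure ℝ))))
    (hfin : volume {w : ℝ × ℝ |
      optrace (X ∘L ContinuousLinearMap.adjoint (ρ w)) ≠ 0} < ⊤) :
    X = 0 := by
  have hW : IsWeyl ρ := hρ
  set V := LinearMap.range (X : Lp ℂ 2 (volume : Measure ℝ) →ₗ[ℂ] Lp ℂ 2 (volume : Measure ℝ))
  set b := stdOrthonormalBasis ℂ V
  set e : Fin (Module.finrank ℂ V) → Lp ℂ 2 (volume : Measure ℝ) := fun i => b i with he_def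
  have he : Orthonormal ℂ e := b.orthonormal.comp_linearIsometry V.subtypeₗᵢ
  have hX : ∀ φ, X φ = ∑ i, ⟪e i, X φ⟫_ℂ • e i := by
    intro φ
    have h := congrArg (Subtype.val) (b.sum_repr' ⟨X φ, LinearMap.mem_range_self _ φ⟩)
    simpa [e] using h.symm
  set R : ℝ × ℝ → PiLp 2 (fun _ : Fin (Module.finrank ℂ V) => Lp ℂ 2 (volume : Measure ℝ)) :=
    fun w => WithLp.toLp 2 fun i => ContinuousLinearMap.adjoint (ρ w) (e i) with hR
  have hinner : ∀ h w, ⟪h, R w⟫_ℂ = ∑ i, ⟪ρ w (h i), e i⟫_ℂ := by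
    intro h w
    rw [PiLp.inner_apply]
    simp only [R, ContinuousLinearMap.adjoint_inner_right]
  set g : PiLp 2 (fun _ : Fin (Module.finrank ℂ V) => Lp ℂ 2 (volume : Measure ℝ)) :=
    WithLp.toLp 2 fun i => ContinuousLinearMap.adjoint X (e i) with hg
  have hαg : ∀ w, optrace (X ∘L ContinuousLinearMap.adjoint (ρ w)) = ⟪g, R w⟫_ℂ := fun w => by
    rw [optrace_comp_adjoint X (ρ w) e hX, hinner]
  have hnorm : ∀ h : PiLp 2 (fun _ : Fin (Module.finrank ℂ V) => Lp ℂ 2 (volume : Measure ℝ)),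
      ‖h‖ₑ ^ 2 = ∑ i, ‖h i‖ₑ ^ 2 := by
    intro h
    rw [← ofReal_norm, ← ENNReal.ofReal_pow (norm_nonneg _), PiLp.norm_sq_eq_of_L2,
      ENNReal.ofReal_sum_of_nonneg (fun _ _ => by positivity)]
    refine Finset.sum_congr rfl fun i _ => ?_
    rw [ENNReal.ofReal_pow (norm_nonneg _), ofReal_norm]
  have hg0 : g = 0 := by
    refine eq_zero_of_volume_support_lt_top (R := R) (C := Module.finrank ℂ V)
      (ENNReal.natCast_ne_top _) ?_ ?_ ?_ ?_ g ?_
    · intro w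
      rw [hnorm]
      have h1 : ∀ i, ‖R w i‖ₑ ≤ 1 := by
        intro i
        have h2 : ‖ContinuousLinearMap.adjoint (ρ w)‖ ≤ 1 := by
          rw [LinearIsometryEquiv.norm_map]
          exact ContinuousLinearMap.opNorm_le_bound _ zero_le_one fun φ => by
            rw [hW.norm_apply, one_mul]
        have h3 := ContinuousLinearMap.le_of_opNorm_le _ h2 (e i)
        rw [he.1 i, one_mul] at h3
        rw [← ofReal_norm]
        exact ENNReal.ofReal_le_one.2 h3
      calc ∑ i, ‖R w i‖ₑ ^ 2 ≤ ∑ _i : Fin (Module.finrank ℂ V), (1 : ℝ≥0∞) :=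
            Finset.sum_le_sum fun i _ => pow_le_one₀ zero_le (h1 i)
        _ = Module.finrank ℂ V := by simp
    · intro h
      simp_rw [hinner]
      exact hW.measurable_sum_inner e fun i => h i
    · intro h
      simp_rw [hinner]
      rw [hW.lintegral_sum_inner he fun i => h i, hnorm]
    · intro h u
      refine ⟨WithLp.toLp 2 fun i => ρ u (h i), fun w => ?_⟩
      simp only [hinner, hW.apply_apply w u, inner_smul_left, ← Finset.mul_sum, mul_eq_zero,
        map_eq_zero, Complex.exp_ne_zero, false_or]
    · simpa only [hαg] using hfin
  ext1 φ
  rw [hX φ, zero_apply]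
  refine Finset.sum_eq_zero fun i _ => ?_
  have h1 : ContinuousLinearMap.adjoint X (e i) = 0 := congrArg (fun h => h i) hg0
  rw [← ContinuousLinearMap.adjoint_inner_left, h1, inner_zero_left, zero_smul]
end

section
/- Let Λ ⊆ ℝ² be a lattice such that σ(n,n') ∈ ℤ for all n, n' ∈ Λ (i.e. Λ is isotropic for the pairing e(w,w') = e^{2πi σ(w,w')}), and let a be the covolume of Λ (the Lebesgue measure of a fundamental domain). Then a is a positive integer, Λ is contained in Λ⊥ = {w ∈ ℝ² : σ(n,w) ∈ ℤ for all n ∈ Λ}, and the quotient group Λ⊥/Λ is finite with exactly a² elements. -/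
/-!
Let `u, v` be a `ℤ`-basis of `Λ` and `d = σ(u, v)`. The covolume of `Λ` is `|d|`, since `d` is the
determinant of `(u, v)` in the standard basis; isotropy makes `d` an integer, and it is nonzero
because covolumes are positive. Put `a = |d|`. The map `w ↦ (σ(u, w), σ(v, w))` sends `Λ⊥` onto
`ℤ × ℤ`, and the identity `d w = -σ(v, w) u + σ(u, w) v` shows that `w ∈ Λ` exactly when both
coordinates are divisible by `d`. Hence `Λ⊥ / Λ ≃ (ℤ/a)²`.
-/

open MeasureTheory Real

/-- The standard symplectic form on `ℝ²`: `σ((x,y),(x',y')) = xy' − yx'`. -/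
def symp (w v : ℝ × ℝ) : ℝ := w.1 * v.2 - w.2 * v.1

/-- `Λ⊥ = {w ∈ ℝ² : σ(n,w) ∈ ℤ for all n ∈ Λ}`, as an additive subgroup of `ℝ²`. -/
def sympPerp (Λ : Submodule ℤ (ℝ × ℝ)) : AddSubgroup (ℝ × ℝ) where
  carrier := {w : ℝ × ℝ | ∀ n ∈ Λ, ∃ k : ℤ, symp n w = k}
  zero_mem' := fun n _ => ⟨0, by simp [symp]⟩
  add_mem' := by
    intro w w' hw hw' n hn
    obtain ⟨k, hk⟩ := hw n hn
    obtain ⟨k', hk'⟩ := hw' n hn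
    exact ⟨k + k', by push_cast; rw [← hk, ← hk']; simp [symp]; ring⟩
  neg_mem' := by
    intro w hw n hn
    obtain ⟨k, hk⟩ := hw n hn
    exact ⟨-k, by push_cast; rw [← hk]; simp [symp]; ring⟩

lemma symp_add_right (n w w' : ℝ × ℝ) : symp n (w + w') = symp n w + symp n w' := by
  simp only [symp, Prod.fst_add, Prod.snd_add]; ring

lemma covolume_eq_abs_symp (Λ : Submodule ℤ (ℝ × ℝ)) [DiscreteTopology Λ] [IsZLattice ℝ Λ]
    (b : Module.Basis (Fin 2) ℤ Λ) :
    ZLattice.covolume Λ volume = |symp (b 0) (b 1)| := by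
  have hfd : ZSpan.fundamentalDomain (Module.Basis.finTwoProd ℝ) =
      Set.Ico (0 : ℝ) 1 ×ˢ Set.Ico (0 : ℝ) 1 := by
    ext x
    simp [ZSpan.mem_fundamentalDomain, Fin.forall_fin_two]
  have hvol : (volume : Measure (ℝ × ℝ)).real
      (ZSpan.fundamentalDomain (Module.Basis.finTwoProd ℝ)) = 1 := by
    rw [hfd, Measure.real, Measure.volume_eq_prod, Measure.prod_prod]
    simp
  rw [ZLattice.covolume_eq_det_mul_measureReal Λ volume b (Module.Basis.finTwoProd ℝ), hvol,
    mul_one, Module.Basis.det_apply, Matrix.det_fin_two]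
  simp only [Module.Basis.toMatrix_apply, Function.comp_apply, symp,
    Module.Basis.coe_finTwoProd_repr, Matrix.cons_val_zero, Matrix.cons_val_one]
  ring_nf

/-- An element of `Λ⊥` pairs integrally with a lattice vector `n`; this is the resulting
homomorphism `w ↦ σ(n, w)` to `ℤ`, with the integer extracted by `⌊·⌋`. -/
noncomputable def pairInt (Λ : Submodule ℤ (ℝ × ℝ)) (n : Λ) : sympPerp Λ →+ ℤ :=
  AddMonoidHom.mk' (fun w => ⌊symp n w⌋) (by
    intro w w'
    obtain ⟨k, hk⟩ := w.2 n n.2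
    obtain ⟨k', hk'⟩ := w'.2 n n.2
    rw [AddSubgroup.coe_add, symp_add_right, hk, hk', ← Int.cast_add]
    simp only [Int.floor_intCast])

lemma pairInt_cast (Λ : Submodule ℤ (ℝ × ℝ)) (n : Λ) (w : sympPerp Λ) :
    (pairInt Λ n w : ℝ) = symp n w := by
  obtain ⟨k, hk⟩ := w.2 n n.2
  simp [pairInt, hk]

lemma mem_iff_basis (Λ : Submodule ℤ (ℝ × ℝ)) (b : Module.Basis (Fin 2) ℤ Λ) (w : ℝ × ℝ) :
    w ∈ Λ ↔ ∃ r s : ℤ, w = (r : ℝ) • (b 0 : ℝ × ℝ) + (s : ℝ) • (b 1 : ℝ × ℝ) := by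
  constructor
  · intro hw
    refine ⟨b.repr ⟨w, hw⟩ 0, b.repr ⟨w, hw⟩ 1, ?_⟩
    have h := congrArg (Subtype.val) (b.sum_repr ⟨w, hw⟩)
    rw [Fin.sum_univ_two] at h
    simpa only [Submodule.coe_add, Submodule.coe_smul, Int.cast_smul_eq_zsmul] using h.symm
  · rintro ⟨r, s, rfl⟩
    simp only [Int.cast_smul_eq_zsmul]
    exact Λ.add_mem (Λ.smul_mem _ (b 0).2) (Λ.smul_mem _ (b 1).2)

/-- If `Λ ⊆ ℝ²` is a lattice which is isotropic for `e(w,w') = e^{2πi σ(w,w')}` (i.e.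
`σ(n,n') ∈ ℤ` for all `n,n' ∈ Λ`) and `a` is its covolume, then `a` is a positive integer,
`Λ ⊆ Λ⊥`, and the quotient `Λ⊥/Λ` is finite with exactly `a²` elements. -/
theorem isotropic_lattice_perp_quotient_card
    (Λ : Submodule ℤ (ℝ × ℝ)) [DiscreteTopology Λ] [IsZLattice ℝ Λ]
    (hiso : ∀ n ∈ Λ, ∀ n' ∈ Λ, ∃ k : ℤ, symp n n' = k) :
    ∃ aN : ℕ, 0 < aN ∧ ZLattice.covolume Λ volume = aN ∧
      Λ.toAddSubgroup ≤ sympPerp Λ ∧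
      Nat.card (↥(sympPerp Λ) ⧸ Λ.toAddSubgroup.addSubgroupOf (sympPerp Λ)) = aN ^ 2 := by
  have : Module.Finite ℤ Λ := ZLattice.module_finite ℝ Λ
  have : Module.Free ℤ Λ := ZLattice.module_free ℝ Λ
  have hrank : Module.finrank ℤ Λ = 2 := by rw [ZLattice.rank ℝ Λ]; simp
  let b : Module.Basis (Fin 2) ℤ Λ := Module.finBasisOfFinrankEq ℤ Λ hrank
  obtain ⟨d, hd⟩ := hiso _ (b 0).2 _ (b 1).2
  have hcov : ZLattice.covolume Λ volume = (d.natAbs : ℕ) := by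
    rw [covolume_eq_abs_symp Λ b, hd, Nat.cast_natAbs, Int.cast_abs]
  have hd0 : d ≠ 0 := by
    rintro rfl
    exact ZLattice.covolume_ne_zero Λ volume (by simpa using hcov)
  have hdR : (d : ℝ) ≠ 0 := Int.cast_ne_zero.mpr hd0
  refine ⟨d.natAbs, Int.natAbs_pos.mpr hd0, hcov, fun w hw n hn => hiso n hn w hw, ?_⟩
  set f : sympPerp Λ →+ ZMod d.natAbs × ZMod d.natAbs :=
    ((Int.castAddHom (ZMod d.natAbs)).comp (pairInt Λ (b 0))).prod
      ((Int.castAddHom (ZMod d.natAbs)).comp (pairInt Λ (b 1))) with hf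
  have hdvd (k : ℤ) : (k : ZMod d.natAbs) = 0 ↔ d ∣ k := by
    rw [ZMod.intCast_zmod_eq_zero_iff_dvd, Int.natAbs_dvd]
  have hker : f.ker = Λ.toAddSubgroup.addSubgroupOf (sympPerp Λ) := by
    ext w
    have h0 := pairInt_cast Λ (b 0) w
    have h1 := pairInt_cast Λ (b 1) w
    have hmem : f w = 0 ↔ d ∣ pairInt Λ (b 0) w ∧ d ∣ pairInt Λ (b 1) w := by
      simp [hf, Prod.ext_iff, hdvd]
    rw [AddMonoidHom.mem_ker, hmem, AddSubgroup.mem_addSubgroupOf, Submodule.mem_toAddSubgroup,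
      mem_iff_basis Λ b]
    constructor
    · rintro ⟨⟨s, hs⟩, ⟨r, hr⟩⟩
      rw [hs] at h0
      rw [hr] at h1
      push_cast at h0 h1
      refine ⟨-r, s, ?_⟩
      -- Cancel `d` in `d w = -σ(v, w) u + σ(u, w) v`.
      simp only [symp] at h0 h1 hd
      ext
      · apply mul_left_cancel₀ hdR
        simp only [Prod.fst_add, Prod.smul_fst, smul_eq_mul]
        push_cast
        linear_combination (-(w : ℝ × ℝ).1) * hd + (b 0 : ℝ × ℝ).1 * h1 - (b 1 : ℝ × ℝ).1 * h0
      · apply mul_left_cancel₀ hdR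
        simp only [Prod.snd_add, Prod.smul_snd, smul_eq_mul]
        push_cast
        linear_combination (-(w : ℝ × ℝ).2) * hd + (b 0 : ℝ × ℝ).2 * h1 - (b 1 : ℝ × ℝ).2 * h0
    · rintro ⟨r, s, hw⟩
      rw [hw] at h0 h1
      simp only [symp, Prod.fst_add, Prod.smul_fst, Prod.snd_add, Prod.smul_snd,
        smul_eq_mul] at h0 h1 hd
      refine ⟨⟨s, ?_⟩, ⟨-r, ?_⟩⟩
      · have : (pairInt Λ (b 0) w : ℝ) = ((d * s : ℤ) : ℝ) := by
          push_cast; linear_combination h0 + s * hd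
        exact_mod_cast this
      · have : (pairInt Λ (b 1) w : ℝ) = ((d * -r : ℤ) : ℝ) := by
          push_cast; linear_combination h1 - r * hd
        exact_mod_cast this
  have hsurj : Function.Surjective f := by
    rintro ⟨x, y⟩
    obtain ⟨k, rfl⟩ := ZMod.intCast_surjective x
    obtain ⟨l, rfl⟩ := ZMod.intCast_surjective y
    -- Cramer's rule: the vector `w` with `σ(u, w) = k` and `σ(v, w) = l`.
    let w : ℝ × ℝ := (-(l : ℝ) / d) • (b 0 : ℝ × ℝ) + ((k : ℝ) / d) • (b 1 : ℝ × ℝ)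
    have hw0 : symp (b 0) w = k := by
      have : symp (b 0) w = k / d * symp (b 0) (b 1) := by simp [w, symp]; ring
      rw [this, hd, div_mul_cancel₀ _ hdR]
    have hw1 : symp (b 1) w = l := by
      have : symp (b 1) w = l / d * symp (b 0) (b 1) := by simp [w, symp]; ring
      rw [this, hd, div_mul_cancel₀ _ hdR]
    have hw : w ∈ sympPerp Λ := by
      intro n hn
      obtain ⟨r, s, rfl⟩ := (mem_iff_basis Λ b n).mp hn
      refine ⟨r * k + s * l, ?_⟩
      push_cast
      rw [← hw0, ← hw1]
      simp only [symp, Prod.fst_add, Prod.smul_fst, Prod.snd_add, Prod.smul_snd, smul_eq_mul]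
      ring
    refine ⟨⟨w, hw⟩, ?_⟩
    have e0 : pairInt Λ (b 0) ⟨w, hw⟩ = k := by
      exact_mod_cast (pairInt_cast Λ (b 0) ⟨w, hw⟩).trans hw0
    have e1 : pairInt Λ (b 1) ⟨w, hw⟩ = l := by
      exact_mod_cast (pairInt_cast Λ (b 1) ⟨w, hw⟩).trans hw1
    simp [hf, e0, e1]
  rw [← hker, ← AddSubgroup.index_eq_card, AddSubgroup.index_ker,
    AddMonoidHom.range_eq_top.mpr hsurj, AddSubgroup.card_top, Nat.card_prod, Nat.card_zmod, sq]
end
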